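/- arXiv:1305.3514 — 10 statements merged into one kernel-verified Lean document; each statement's English description precedes it below -/
import Mathlib

section
/- The 16 vectors ½·∑_{p∈(𝔽₂)⁴} K_p, ½·∑_{p: p₁=0} K_p, ½·∑_{p: p₂=0} K_p, ½·∑_{p: p₃=0} K_p, ½·∑_{p: p₄=0} K_p, K_{(0,0,0,0)}, K_{(1,0,0,0)}, K_{(0,1,0,0)}, K_{(0,0,1,0)}, K_{(0,0,0,1)}, K_{(0,0,1,1)}, K_{(0,1,0,1)}, K_{(1,0,0,1)}, K_{(0,1,1,0)}, K_{(1,0,1,0)}, K_{(1,1,0,0)} form a ℤ-basis of the Kummer lattice K; moreover K is an even negative definite lattice of rank 16, i.e. B(x,y) ∈ ℤ and B(x,x) ∈ 2ℤ for all x,y ∈ K and B(x,x) < 0 for all nonzero x ∈ K, and the determinant of the Gram matrix (B(v_i,v_j)) of the above 16 vectors equals 2⁶. -/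
namespace Stmt0

/-- The 16 points of the affine space `(𝔽₂)⁴`. -/
abbrev P : Type := Fin 4 → ZMod 2

/-- The ambient `ℚ`-vector space `ℚ^{(𝔽₂)⁴}`. -/
abbrev V : Type := P → ℚ

/-- The standard basis vector `K_p`. -/
noncomputable def Kvec (p : P) : V := Pi.single p 1

/-- The bilinear form with `B (K_p) (K_q) = -2 δ_{pq}`. -/
noncomputable def B (x y : V) : ℚ := -2 * ∑ p : P, x p * y p

/-- Affine hyperplanes of `(𝔽₂)⁴`. -/
def IsHyperplane (W : Finset P) : Prop :=
  ∃ α : P, α ≠ 0 ∧ ∃ ε : ZMod 2,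
    W = Finset.univ.filter (fun a => ∑ i, α i * a i = ε)

/-- The vector `½ ∑_{p ∈ W} K_p`. -/
noncomputable def halfSum (W : Finset P) : V := (1/2 : ℚ) • ∑ p ∈ W, Kvec p

/-- The Kummer lattice `K`: the `ℤ`-submodule generated by the `K_p`, the classes
`½ ∑_{p ∈ W} K_p` for affine hyperplanes `W` and the class `½ ∑_{p} K_p`. -/
noncomputable def KummerLattice : Submodule ℤ V :=
  Submodule.span ℤ
    (Set.range Kvec ∪ {x | ∃ W : Finset P, IsHyperplane W ∧ x = halfSum W} ∪
      {halfSum Finset.univ})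

/-- The 16 vectors of the statement. -/
noncomputable def v : Fin 16 → V :=
  ![halfSum Finset.univ,
    halfSum (Finset.univ.filter (fun a => a 0 = 0)),
    halfSum (Finset.univ.filter (fun a => a 1 = 0)),
    halfSum (Finset.univ.filter (fun a => a 2 = 0)),
    halfSum (Finset.univ.filter (fun a => a 3 = 0)),
    Kvec ![0,0,0,0], Kvec ![1,0,0,0], Kvec ![0,1,0,0], Kvec ![0,0,1,0],
    Kvec ![0,0,0,1], Kvec ![0,0,1,1], Kvec ![0,1,0,1], Kvec ![1,0,0,1],
    Kvec ![0,1,1,0], Kvec ![1,0,1,0], Kvec ![1,1,0,0]]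

/-!
Attach to a point `p` the coordinate subspace of points supported in the support of `p`. The listed
vectors are the half sums over the coordinate subspaces of dimension at least `3`, together with the
vectors `K_p` for `p` of weight at most `2`. Ordering the points suitably makes their coordinates
triangular, with five diagonal entries `1/2` and eleven `1`; this yields independence and the Gram
determinant `(-2)^16 * (2^(-5))^2 = 2^6`.

Doubling the half sum over the coordinate subspace of `p` writes `K_p` in terms of points of smaller
weight, so the listed vectors generate every `K_p`. Once a lattice contains every `K_p`, the subsets
with half sum in the lattice form a binary code, because the half sum of a symmetric difference is
the sum of the half sums up to a sum of `K_p`. Every hyperplane has an affine indicator function,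
which is a combination of `1` and the indicators of the coordinate hyperplanes.

Integrality and evenness hold on generators because two coordinate subspaces of dimension at least
`3` meet in at least `2 ^ 2` points.
-/

section BiadditiveForms

variable {M A : Type*} [AddCommGroup M] [Ring A] (b : M →ₗ[ℤ] M →ₗ[ℤ] A) {s : Set M}

lemma exists_int_of_mem_span (hs : ∀ x ∈ s, ∀ y ∈ s, ∃ n : ℤ, b x y = n) {x y : M}
    (hx : x ∈ Submodule.span ℤ s) (hy : y ∈ Submodule.span ℤ s) : ∃ n : ℤ, b x y = n := by
  have mem_one_iff (a : A) : a ∈ (1 : Submodule ℤ A) ↔ ∃ n : ℤ, a = n := by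
    simp only [Submodule.mem_one, eq_intCast, eq_comm]
  simp only [← mem_one_iff] at hs ⊢
  exact LinearMap.BilinMap.apply_apply_mem_of_mem_span 1 s s b hs x y hx hy

lemma exists_two_mul_int_of_mem_span (hsymm : ∀ x y, b x y = b y x)
    (hs : ∀ x ∈ s, ∀ y ∈ s, ∃ n : ℤ, b x y = n) (hs_even : ∀ x ∈ s, ∃ n : ℤ, b x x = 2 * n)
    {x : M} (hx : x ∈ Submodule.span ℤ s) : ∃ n : ℤ, b x x = 2 * n := by
  induction hx using Submodule.span_induction with
  | mem x hx => exact hs_even x hx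
  | zero => exact ⟨0, by simp⟩
  | add x y hx hy ihx ihy =>
    obtain ⟨k, hk⟩ := ihx
    obtain ⟨l, hl⟩ := ihy
    obtain ⟨m, hm⟩ := exists_int_of_mem_span b hs hx hy
    refine ⟨k + l + m, ?_⟩
    simp only [map_add, LinearMap.add_apply, hsymm y x, hk, hl, hm]
    push_cast
    noncomm_ring
  | smul c x _ ih =>
    obtain ⟨k, hk⟩ := ih
    refine ⟨c * (c * k), ?_⟩
    simp only [map_smul, LinearMap.smul_apply, hk, zsmul_eq_mul, Int.cast_mul]
    norm_cast
    congr 1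
    ring

end BiadditiveForms

section Form

lemma B_eq_dotProduct (x y : V) : B x y = -2 * x ⬝ᵥ y := rfl

lemma B_comm (x y : V) : B x y = B y x := by
  simp only [B_eq_dotProduct, dotProduct_comm]

/-- The form `B` as a `ℤ`-bilinear map, which is the structure that matters for lattices in `V`. -/
noncomputable def bilinB : V →ₗ[ℤ] V →ₗ[ℤ] ℚ :=
  LinearMap.mk₂ ℤ B
    (fun x y z ↦ by simp only [B_eq_dotProduct, add_dotProduct, mul_add])
    (fun n x y ↦ by simp only [B_eq_dotProduct, smul_dotProduct, mul_smul_comm])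
    (fun x y z ↦ by simp only [B_eq_dotProduct, dotProduct_add, mul_add])
    (fun n x y ↦ by simp only [B_eq_dotProduct, dotProduct_smul, mul_smul_comm])

lemma B_self_neg {x : V} (hx : x ≠ 0) : B x x < 0 := by
  have hpos : 0 < x ⬝ᵥ x := Matrix.dotProduct_star_self_pos_iff.2 hx
  rw [B_eq_dotProduct]
  linarith

lemma det_gram (w : P → V) :
    (Matrix.of fun p q ↦ B (w p) (w q)).det = 2 ^ 16 * (Matrix.of w).det ^ 2 := by
  have gram_eq : (Matrix.of fun p q ↦ B (w p) (w q)) =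
      (-2 : ℚ) • (Matrix.of w * (Matrix.of w).transpose) := rfl
  have card_P : Fintype.card P = 16 := by simp
  rw [gram_eq, Matrix.det_smul, Matrix.det_mul, Matrix.det_transpose, card_P]
  ring

end Form

section HalfSums

variable {L : Submodule ℤ V} {W : Finset P}

lemma kvec_apply (p q : P) : Kvec p q = if q = p then 1 else 0 :=
  Pi.single_apply p 1 q

lemma halfSum_apply (W : Finset P) (p : P) : halfSum W p = if p ∈ W then 1 / 2 else 0 := by
  simp [halfSum, Finset.sum_apply, kvec_apply]

lemma B_kvec_left (p : P) (x : V) : B (Kvec p) x = -2 * x p := by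
  rw [B_eq_dotProduct, Kvec, single_one_dotProduct]

lemma B_halfSum_halfSum (W W' : Finset P) :
    B (halfSum W) (halfSum W') = -((W ∩ W').card / 2 : ℚ) := by
  have hmul (p : P) : halfSum W p * halfSum W' p = if p ∈ W ∩ W' then 1 / 4 else 0 := by
    by_cases hW : p ∈ W <;> by_cases hW' : p ∈ W' <;>
      norm_num [halfSum_apply, Finset.mem_inter, hW, hW']
  simp only [B, hmul, Finset.sum_ite_mem, Finset.univ_inter, Finset.sum_const, nsmul_eq_mul]
  ring

lemma halfSum_symmDiff (W W' : Finset P) :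
    halfSum (symmDiff W W') = halfSum W + halfSum W' - ∑ p ∈ W ∩ W', Kvec p := by
  ext p
  by_cases hW : p ∈ W <;> by_cases hW' : p ∈ W' <;>
    norm_num [halfSum_apply, kvec_apply, Finset.sum_apply, Finset.mem_symmDiff, hW, hW']

lemma kvec_mem_of_halfSum_mem {p : P} (hp : p ∈ W) (hW : halfSum W ∈ L)
    (hK : ∀ q ∈ W, q ≠ p → Kvec q ∈ L) : Kvec p ∈ L := by
  have two_halfSum : (2 : ℤ) • halfSum W = Kvec p + ∑ q ∈ W.erase p, Kvec q := by
    rw [Finset.add_sum_erase W Kvec hp, halfSum, ← Int.cast_smul_eq_zsmul ℚ, smul_smul]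
    norm_num
  have hsum : ∑ q ∈ W.erase p, Kvec q ∈ L :=
    L.sum_mem fun q hq ↦ hK q (Finset.mem_of_mem_erase hq) (Finset.ne_of_mem_erase hq)
  rw [← L.add_mem_iff_left hsum, ← two_halfSum]
  exact L.smul_mem 2 hW

/-- The binary code of a lattice `L` containing every `K_p`: a subset of `P`, encoded by its
indicator function `f : P → ZMod 2`, is a code word when its half sum lies in `L`. -/
def halfSumCode (L : Submodule ℤ V) (hK : ∀ p, Kvec p ∈ L) :
    Submodule (ZMod 2) (P → ZMod 2) where
  carrier := {f | halfSum (Finset.univ.filter fun p ↦ f p = 1) ∈ L}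
  zero_mem' := by simp [halfSum]
  add_mem' {f g} hf hg := by
    have eq_one_add : ∀ x y : ZMod 2, x + y = 1 ↔ x = 1 ∧ y ≠ 1 ∨ y = 1 ∧ x ≠ 1 := by decide
    have filter_add : (Finset.univ.filter fun p ↦ (f + g) p = 1) =
        symmDiff (Finset.univ.filter fun p ↦ f p = 1) (Finset.univ.filter fun p ↦ g p = 1) := by
      ext p
      simp [Finset.mem_symmDiff, eq_one_add]
    rw [Set.mem_ofPred_eq, filter_add, halfSum_symmDiff]
    exact L.sub_mem (L.add_mem hf hg) (L.sum_mem fun p _ ↦ hK p)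
  smul_mem' c f hf := by
    obtain rfl | rfl : c = 0 ∨ c = 1 := by revert c; decide
    · simp [halfSum]
    · simpa using hf

lemma mem_halfSumCode {hK : ∀ p, Kvec p ∈ L} {f : P → ZMod 2} :
    f ∈ halfSumCode L hK ↔ halfSum (Finset.univ.filter fun p ↦ f p = 1) ∈ L :=
  Iff.rfl

lemma halfSum_mem_of_isHyperplane (hK : ∀ p, Kvec p ∈ L) (huniv : halfSum Finset.univ ∈ L)
    (hcoord : ∀ i, halfSum (Finset.univ.filter fun a ↦ a i = 0) ∈ L) (hW : IsHyperplane W) :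
    halfSum W ∈ L := by
  obtain ⟨α, -, ε, rfl⟩ := hW
  have one_mem : 1 ∈ halfSumCode L hK := by simpa [mem_halfSumCode] using huniv
  have coord_mem (i : Fin 4) : (fun a ↦ a i + 1) ∈ halfSumCode L hK := by
    simpa [mem_halfSumCode] using hcoord i
  have indicator_mem :
      (1 + ε + ∑ i, α i) • 1 + ∑ i, α i • (fun a : P ↦ a i + 1) ∈ halfSumCode L hK :=
    add_mem (Submodule.smul_mem _ _ one_mem)
      (sum_mem fun i _ ↦ Submodule.smul_mem _ _ (coord_mem i))
  have indicator_eq_one : ∀ ε s t : ZMod 2, 1 + ε + s + (t + s) = 1 ↔ t = ε := by decide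
  simpa [mem_halfSumCode, Finset.sum_apply, mul_add, Finset.sum_add_distrib, indicator_eq_one]
    using indicator_mem

lemma kummerLattice_le (hK : ∀ p, Kvec p ∈ L) (huniv : halfSum Finset.univ ∈ L)
    (hcoord : ∀ i, halfSum (Finset.univ.filter fun a ↦ a i = 0) ∈ L) : KummerLattice ≤ L := by
  refine Submodule.span_le.2 ?_
  rintro _ ((⟨p, rfl⟩ | ⟨W, hW, rfl⟩) | rfl)
  · exact hK p
  · exact halfSum_mem_of_isHyperplane hK huniv hcoord hW
  · exact huniv

end HalfSums

section Generators

lemma kvec_mem_kummerLattice (p : P) : Kvec p ∈ KummerLattice :=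
  Submodule.subset_span (.inl (.inl ⟨p, rfl⟩))

lemma halfSum_mem_kummerLattice {W : Finset P} (hW : IsHyperplane W) :
    halfSum W ∈ KummerLattice :=
  Submodule.subset_span (.inl (.inr ⟨W, hW, rfl⟩))

lemma halfSum_univ_mem_kummerLattice : halfSum Finset.univ ∈ KummerLattice :=
  Submodule.subset_span (.inr rfl)

lemma isHyperplane_coord (i : Fin 4) : IsHyperplane (Finset.univ.filter fun a ↦ a i = 0) :=
  ⟨Pi.single i 1, by simp, 0, by simp [Pi.single_apply]⟩

end Generators

section CoordinateSubspaces

/-- The linear subspace of `(𝔽₂)⁴` spanned by the coordinate directions in the support of `p`, that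
is, the points whose support is contained in the support of `p`. -/
def coordSubspace (p : P) : Finset P := Finset.univ.filter fun a ↦ ∀ i, p i = 0 → a i = 0

lemma mem_coordSubspace {p a : P} : a ∈ coordSubspace p ↔ ∀ i, p i = 0 → a i = 0 := by
  simp [coordSubspace]

lemma self_mem_coordSubspace (p : P) : p ∈ coordSubspace p :=
  mem_coordSubspace.2 fun _ h ↦ h

lemma coordSubspace_one : coordSubspace 1 = Finset.univ := by
  simp [coordSubspace]

lemma coordSubspace_update (i : Fin 4) :
    coordSubspace (Function.update 1 i 0) = Finset.univ.filter fun a ↦ a i = 0 := by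
  simp [coordSubspace, Function.update_apply]

lemma coordSubspace_inter (p q : P) :
    coordSubspace p ∩ coordSubspace q = coordSubspace (p * q) := by
  ext a
  simp only [Finset.mem_inter, mem_coordSubspace, Pi.mul_apply, mul_eq_zero, or_imp, forall_and]

lemma card_coordSubspace : ∀ p : P, (coordSubspace p).card = 2 ^ hammingNorm p := by
  decide +kernel

lemma hammingNorm_lt_of_mem_coordSubspace {p a : P} (ha : a ∈ coordSubspace p) (hne : a ≠ p) :
    hammingNorm a < hammingNorm p := by
  have support_subset : (Finset.univ.filter (a · ≠ 0)) ⊆ Finset.univ.filter (p · ≠ 0) := fun i ↦ by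
    simpa using mt (mem_coordSubspace.1 ha i)
  refine Finset.card_lt_card (support_subset.ssubset_of_ne fun heq ↦ hne (funext fun i ↦ ?_))
  have eq_of_zero_iff : ∀ x y : ZMod 2, (x ≠ 0 ↔ y ≠ 0) → x = y := by decide
  exact eq_of_zero_iff _ _ (by simpa using Finset.ext_iff.1 heq i)

lemma eq_one_or_eq_update_of_three_le_hammingNorm :
    ∀ p : P, 3 ≤ hammingNorm p → p = 1 ∨ ∃ i, p = Function.update (1 : P) i 0 := by
  decide +kernel

lemma two_le_hammingNorm_mul : ∀ p q : P, 3 ≤ hammingNorm p → 3 ≤ hammingNorm q →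
    2 ≤ hammingNorm (p * q) := by
  decide +kernel

end CoordinateSubspaces

section AdaptedVectors

/-- The members of the family `v`, indexed by the points of `(𝔽₂)⁴`: the vector attached to `p` is
`K_p` if `p` has weight at most `2`, and the half sum over the coordinate subspace of `p` otherwise.
This indexing makes the matrix of coordinates triangular. -/
noncomputable def adaptedVec (p : P) : V :=
  if 3 ≤ hammingNorm p then halfSum (coordSubspace p) else Kvec p

lemma adaptedVec_of_three_le {p : P} (hp : 3 ≤ hammingNorm p) :
    adaptedVec p = halfSum (coordSubspace p) :=
  if_pos hp

lemma adaptedVec_of_lt_three {p : P} (hp : hammingNorm p < 3) : adaptedVec p = Kvec p :=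
  if_neg hp.not_ge

lemma adaptedVec_one : adaptedVec 1 = halfSum Finset.univ := by
  rw [adaptedVec_of_three_le (by decide), coordSubspace_one]

lemma adaptedVec_update (i : Fin 4) :
    adaptedVec (Function.update 1 i 0) = halfSum (Finset.univ.filter fun a ↦ a i = 0) := by
  rw [adaptedVec_of_three_le (by revert i; decide), coordSubspace_update]

lemma adaptedVec_mem_kummerLattice (p : P) : adaptedVec p ∈ KummerLattice := by
  by_cases hp : 3 ≤ hammingNorm p
  · obtain rfl | ⟨i, rfl⟩ := eq_one_or_eq_update_of_three_le_hammingNorm p hp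
    · rw [adaptedVec_one]
      exact halfSum_univ_mem_kummerLattice
    · rw [adaptedVec_update]
      exact halfSum_mem_kummerLattice (isHyperplane_coord i)
  · rw [adaptedVec_of_lt_three (not_le.1 hp)]
    exact kvec_mem_kummerLattice p

lemma kvec_mem_span_adaptedVec (p : P) : Kvec p ∈ Submodule.span ℤ (Set.range adaptedVec) := by
  have adaptedVec_mem : adaptedVec p ∈ Submodule.span ℤ (Set.range adaptedVec) :=
    Submodule.subset_span ⟨p, rfl⟩
  by_cases hp : 3 ≤ hammingNorm p
  · rw [adaptedVec_of_three_le hp] at adaptedVec_mem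
    refine kvec_mem_of_halfSum_mem (self_mem_coordSubspace p) adaptedVec_mem fun q hq hne ↦ ?_
    have : hammingNorm q < hammingNorm p := hammingNorm_lt_of_mem_coordSubspace hq hne
    exact kvec_mem_span_adaptedVec q
  · rwa [adaptedVec_of_lt_three (not_le.1 hp)] at adaptedVec_mem
termination_by hammingNorm p

theorem span_adaptedVec : Submodule.span ℤ (Set.range adaptedVec) = KummerLattice := by
  refine le_antisymm (Submodule.span_le.2 ?_) (kummerLattice_le kvec_mem_span_adaptedVec ?_ ?_)
  · rintro _ ⟨p, rfl⟩
    exact adaptedVec_mem_kummerLattice p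
  · exact Submodule.subset_span ⟨1, adaptedVec_one⟩
  · exact fun i ↦ Submodule.subset_span ⟨Function.update 1 i 0, adaptedVec_update i⟩

lemma exists_int_B_kvec_adaptedVec (p q : P) : ∃ n : ℤ, B (Kvec p) (adaptedVec q) = n := by
  rw [B_kvec_left]
  by_cases hq : 3 ≤ hammingNorm q
  · refine ⟨if p ∈ coordSubspace q then -1 else 0, ?_⟩
    rw [adaptedVec_of_three_le hq, halfSum_apply]
    split_ifs <;> norm_num
  · refine ⟨if p = q then -2 else 0, ?_⟩
    rw [adaptedVec_of_lt_three (not_le.1 hq), kvec_apply]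
    split_ifs <;> norm_num

lemma exists_int_B_adaptedVec (p q : P) : ∃ n : ℤ, B (adaptedVec p) (adaptedVec q) = n := by
  by_cases hp : 3 ≤ hammingNorm p
  · by_cases hq : 3 ≤ hammingNorm q
    · obtain ⟨k, hk⟩ := pow_dvd_pow 2 (two_le_hammingNorm_mul p q hp hq)
      refine ⟨-(2 * k), ?_⟩
      rw [adaptedVec_of_three_le hp, adaptedVec_of_three_le hq, B_halfSum_halfSum,
        coordSubspace_inter, card_coordSubspace, hk]
      push_cast
      ring
    · rw [B_comm, adaptedVec_of_lt_three (not_le.1 hq)]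
      exact exists_int_B_kvec_adaptedVec q p
  · rw [adaptedVec_of_lt_three (not_le.1 hp)]
    exact exists_int_B_kvec_adaptedVec p q

lemma exists_two_mul_int_B_adaptedVec_self (p : P) :
    ∃ n : ℤ, B (adaptedVec p) (adaptedVec p) = 2 * n := by
  by_cases hp : 3 ≤ hammingNorm p
  · obtain ⟨k, hk⟩ := pow_dvd_pow 2 hp
    refine ⟨-(2 * k), ?_⟩
    rw [adaptedVec_of_three_le hp, B_halfSum_halfSum, Finset.inter_self, card_coordSubspace, hk]
    push_cast
    ring
  · refine ⟨-1, ?_⟩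
    rw [adaptedVec_of_lt_three (not_le.1 hp), B_kvec_left, kvec_apply, if_pos rfl]
    norm_num

lemma adaptedVec_apply_self (p : P) :
    adaptedVec p p = if 3 ≤ hammingNorm p then 1 / 2 else 1 := by
  unfold adaptedVec
  split_ifs
  · rw [halfSum_apply, if_pos (self_mem_coordSubspace p)]
  · rw [kvec_apply, if_pos rfl]

lemma prod_adaptedVec_apply_self : ∏ p, adaptedVec p p = (1 / 2) ^ 5 := by
  have card_three_le : (Finset.univ.filter fun p : P ↦ 3 ≤ hammingNorm p).card = 5 := by
    decide +kernel
  simp only [adaptedVec_apply_self, Finset.prod_ite, Finset.prod_const, one_pow, mul_one,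
    card_three_le]

end AdaptedVectors

section Pivots

/-- The point `p` for which the `i`-th listed vector `v i` is `adaptedVec p`. -/
def pivot : Fin 16 → P :=
  ![![1,1,1,1], ![0,1,1,1], ![1,0,1,1], ![1,1,0,1], ![1,1,1,0],
    ![0,0,0,0], ![1,0,0,0], ![0,1,0,0], ![0,0,1,0], ![0,0,0,1], ![0,0,1,1],
    ![0,1,0,1], ![1,0,0,1], ![0,1,1,0], ![1,0,1,0], ![1,1,0,0]]

lemma pivot_bijective : Function.Bijective pivot := by
  unfold Function.Bijective Function.Injective Function.Surjective
  decide +kernel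

lemma v_eq_adaptedVec_comp_pivot : v = adaptedVec ∘ pivot := by
  have pivot_zero : pivot 0 = 1 := by decide
  have pivot_coord : ∀ i : Fin 4, pivot (i.succ.castLE (by decide)) =
      Function.update (1 : P) i 0 := by
    decide
  ext1 i
  fin_cases i
  · exact (pivot_zero ▸ adaptedVec_one).symm
  · exact (pivot_coord 0 ▸ adaptedVec_update 0).symm
  · exact (pivot_coord 1 ▸ adaptedVec_update 1).symm
  · exact (pivot_coord 2 ▸ adaptedVec_update 2).symm
  · exact (pivot_coord 3 ▸ adaptedVec_update 3).symm
  all_goals exact (adaptedVec_of_lt_three (by decide)).symm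

lemma adaptedVec_pivot_apply_pivot_eq_zero {i j : Fin 16} (hji : j < i) :
    adaptedVec (pivot i) (pivot j) = 0 := by
  by_cases hi : 3 ≤ hammingNorm (pivot i)
  · have notMem : ∀ i j, j < i → 3 ≤ hammingNorm (pivot i) →
        pivot j ∉ coordSubspace (pivot i) := by
      decide +kernel
    rw [adaptedVec_of_three_le hi, halfSum_apply, if_neg (notMem i j hji hi)]
  · rw [adaptedVec_of_lt_three (not_le.1 hi), kvec_apply, if_neg (pivot_bijective.1.ne hji.ne)]

theorem det_adaptedVec : (Matrix.of adaptedVec).det = (1 / 2) ^ 5 := by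
  let e : Fin 16 ≃ P := Equiv.ofBijective pivot pivot_bijective
  have triangular : ((Matrix.of adaptedVec).submatrix e e).BlockTriangular id :=
    fun _ _ ↦ adaptedVec_pivot_apply_pivot_eq_zero
  rw [← Matrix.det_submatrix_equiv_self e, Matrix.det_of_isUpperTriangular triangular,
    ← prod_adaptedVec_apply_self, ← e.prod_comp]
  rfl

end Pivots

section ListedVectors

theorem linearIndependent_v : LinearIndependent ℤ v := by
  have adaptedVec_indep : LinearIndependent ℚ (Matrix.of adaptedVec).row :=
    Matrix.linearIndependent_rows_of_det_ne_zero (A := Matrix.of adaptedVec)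
      (by rw [det_adaptedVec]; norm_num)
  rw [v_eq_adaptedVec_comp_pivot]
  exact (adaptedVec_indep.comp pivot pivot_bijective.1).restrict_scalars' ℤ

theorem span_v : Submodule.span ℤ (Set.range v) = KummerLattice := by
  rw [v_eq_adaptedVec_comp_pivot, pivot_bijective.2.range_comp, span_adaptedVec]

theorem exists_int_B {x y : V} (hx : x ∈ KummerLattice) (hy : y ∈ KummerLattice) :
    ∃ n : ℤ, B x y = n := by
  rw [← span_adaptedVec] at hx hy
  refine exists_int_of_mem_span bilinB ?_ hx hy
  rintro _ ⟨p, rfl⟩ _ ⟨q, rfl⟩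
  exact exists_int_B_adaptedVec p q

theorem exists_two_mul_int_B_self {x : V} (hx : x ∈ KummerLattice) :
    ∃ n : ℤ, B x x = 2 * n := by
  rw [← span_adaptedVec] at hx
  refine exists_two_mul_int_of_mem_span bilinB B_comm ?_ ?_ hx
  · rintro _ ⟨p, rfl⟩ _ ⟨q, rfl⟩
    exact exists_int_B_adaptedVec p q
  · rintro _ ⟨p, rfl⟩
    exact exists_two_mul_int_B_adaptedVec_self p

theorem det_gram_v : (Matrix.of fun i j ↦ B (v i) (v j)).det = 2 ^ 6 := by
  have gram_eq_submatrix : (Matrix.of fun i j ↦ B (v i) (v j)) =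
      (Matrix.of fun p q ↦ B (adaptedVec p) (adaptedVec q)).submatrix
        (Equiv.ofBijective pivot pivot_bijective) (Equiv.ofBijective pivot pivot_bijective) := by
    rw [v_eq_adaptedVec_comp_pivot]
    rfl
  rw [gram_eq_submatrix, Matrix.det_submatrix_equiv_self, det_gram, det_adaptedVec]
  norm_num

end ListedVectors

/-- The 16 listed vectors form a `ℤ`-basis of the Kummer lattice `K` (hence `K` has
rank 16); `K` is an even lattice, it is negative definite, and the determinant of the
Gram matrix of the 16 listed vectors equals `2⁶`. -/
theorem stmt_0 :
    LinearIndependent ℤ v ∧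
    Submodule.span ℤ (Set.range v) = KummerLattice ∧
    (∀ x ∈ KummerLattice, ∀ y ∈ KummerLattice, ∃ n : ℤ, B x y = n) ∧
    (∀ x ∈ KummerLattice, ∃ n : ℤ, B x x = 2 * n) ∧
    (∀ x ∈ KummerLattice, x ≠ 0 → B x x < 0) ∧
    (Matrix.of fun i j => B (v i) (v j)).det = 2 ^ 6 := by
  exact ⟨linearIndependent_v, span_v, fun _ hx _ hy ↦ exists_int_B hx hy,
    fun _ hx ↦ exists_two_mul_int_B_self hx, fun _ _ hx ↦ B_self_neg hx, det_gram_v⟩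

end Stmt0
end

section
/- For every vector v = (a₁,a₂,a₃,a₄) ∈ ℤ⁴ there exist integers d and e and an isometry f of U ⊕ U such that f(v) = (d, d·e, 0, 0). -/
/-!
Identify `(x₁, x₂, x₃, x₄)` with the matrix `!![x₁, -x₃; x₄, x₂]`. The quadratic form `x₁x₂ + x₃x₄`
becomes the determinant, so `A ↦ P * A * Q` is an isometry for all `P, Q` in `SL₂`. The claim is
thus that over a principal ideal domain a `2 × 2` matrix can be brought by such moves to a Smith
normal form `diag(d, d * e)`. For this, choose the moves so that the upper left entry is minimal
for divisibility: a Bézout combination of that entry and a neighbour cannot be a proper divisor of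
it, so it divides its neighbours and can be used to clear them. Adding the second row of the
resulting diagonal matrix to the first makes the lower right entry a neighbour as well.
-/

namespace Stmt1

/-- The bilinear form of `U ⊕ U` on `ℤ⁴`: the orthogonal sum of two hyperbolic planes. -/
def B (x y : Fin 4 → ℤ) : ℤ := x 0 * y 1 + x 1 * y 0 + x 2 * y 3 + x 3 * y 2

open Matrix MatrixGroups

variable {R : Type*} [CommRing R]

section SmithNormalForm

theorem coe_mul_mul_coe_mul {n : Type*} [Fintype n] [DecidableEq n]
    (P' P Q Q' : SpecialLinearGroup n R) (M : Matrix n n R) :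
    (P' * P).1 * M * (Q * Q').1 = P'.1 * (P.1 * M * Q.1) * Q'.1 := by
  simp [Matrix.mul_assoc]

/-- The upper left entry of `M` is minimal for divisibility among the upper left entries of the
matrices `P * M * Q` with `P, Q ∈ SL(2, R)`. -/
def HasMinimalPivot (M : Matrix (Fin 2) (Fin 2) R) : Prop :=
  ∀ P Q : SL(2, R), (P.1 * M * Q.1) 0 0 ∣ M 0 0 → M 0 0 ∣ (P.1 * M * Q.1) 0 0

theorem exists_hasMinimalPivot_mul_mul [WfDvdMonoid R] (M : Matrix (Fin 2) (Fin 2) R) :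
    ∃ P Q : SL(2, R), HasMinimalPivot (P.1 * M * Q.1) := by
  let pivot (g : SL(2, R) × SL(2, R)) : R := (g.1.1 * M * g.2.1) 0 0
  obtain ⟨_, ⟨⟨P, Q⟩, rfl⟩, hmin⟩ :=
    wellFounded_dvdNotUnit.has_min (Set.range pivot) (Set.range_nonempty pivot)
  refine ⟨P, Q, fun P' Q' hdvd ↦ by_contra fun hndvd ↦ ?_⟩
  rw [← coe_mul_mul_coe_mul] at hdvd hndvd
  exact hmin _ ⟨(P' * P, Q * Q'), rfl⟩ (dvdNotUnit_of_dvd_of_not_dvd hdvd hndvd)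

theorem exists_mulVec_zero_dvd [IsDomain R] [IsBezout R] (v : Fin 2 → R) :
    ∃ g : SL(2, R), ∀ i, (g.1 *ᵥ v) 0 ∣ v i := by
  classical
  let := IsBezout.toGCDDomain R
  obtain ⟨a, b, ha, hb, hab⟩ := extract_gcd (v 0) (v 1)
  obtain ⟨x, y, hxy⟩ := (gcd_isUnit_iff a b).1 hab
  have hcop : IsCoprime x y := ⟨a, b, by linear_combination hxy⟩
  obtain ⟨g, hx, hy⟩ := hcop.exists_SL2_row 0
  have hgcd : (g.1 *ᵥ v) 0 = gcd (v 0) (v 1) := by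
    simp only [mulVec, dotProduct, Fin.sum_univ_two, hx, hy]
    linear_combination x * ha + y * hb + gcd (v 0) (v 1) * hxy
  refine ⟨g, Fin.forall_fin_two.2 ?_⟩
  exact hgcd ▸ ⟨gcd_dvd_left _ _, gcd_dvd_right _ _⟩

namespace HasMinimalPivot

variable {M : Matrix (Fin 2) (Fin 2) R}

theorem mul_mul (hM : HasMinimalPivot M) (P Q : SL(2, R))
    (h : (P.1 * M * Q.1) 0 0 = M 0 0) : HasMinimalPivot (P.1 * M * Q.1) := by
  intro P' Q'
  rw [h, ← coe_mul_mul_coe_mul]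
  exact hM (P' * P) (Q * Q')

theorem transpose (hM : HasMinimalPivot M) : HasMinimalPivot Mᵀ := by
  intro P Q
  have h : P.1 * Mᵀ * Q.1 = (Q.transpose.1 * M * P.transpose.1)ᵀ := by
    simp [Matrix.mul_assoc]
  simpa only [h, transpose_apply] using hM Q.transpose P.transpose

variable [IsDomain R] [IsBezout R]

theorem dvd_one_zero (hM : HasMinimalPivot M) : M 0 0 ∣ M 1 0 := by
  obtain ⟨g, hg⟩ := exists_mulVec_zero_dvd (M.col 0)
  have hpivot : (g.1 * M * (1 : SL(2, R)).1) 0 0 = (g.1 *ᵥ M.col 0) 0 := by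
    simp [mul_apply, mulVec, dotProduct]
  exact (hM g 1 (hpivot ▸ hg 0)).trans (hpivot ▸ hg 1)

theorem dvd_zero_one (hM : HasMinimalPivot M) : M 0 0 ∣ M 0 1 :=
  hM.transpose.dvd_one_zero

theorem dvd_of_diagonal {d b : R} (h : HasMinimalPivot !![d, 0; 0, b]) : d ∣ b := by
  let rowAdd : SL(2, R) := ⟨!![1, 1; 0, 1], by simp⟩
  have hrow : rowAdd.1 * !![d, 0; 0, b] * (1 : SL(2, R)).1 = !![d, b; 0, b] := by
    simp [rowAdd]
  have hpivot : HasMinimalPivot !![d, b; 0, b] :=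
    hrow ▸ h.mul_mul rowAdd 1 (by rw [hrow]; rfl)
  exact hpivot.dvd_zero_one

theorem exists_mul_mul_eq_diagonal (hM : HasMinimalPivot M) :
    ∃ (P Q : SL(2, R)) (b : R), P.1 * M * Q.1 = !![M 0 0, 0; 0, b] := by
  obtain ⟨k, hk⟩ := hM.dvd_one_zero
  obtain ⟨l, hl⟩ := hM.dvd_zero_one
  refine ⟨⟨!![1, 0; -k, 1], by simp⟩, ⟨!![1, -l; 0, 1], by simp⟩, M 1 1 - k * M 0 1, ?_⟩
  rw [eta_fin_two M]
  ext i j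
  fin_cases i <;> fin_cases j <;> simp [hk, hl] <;> ring

end HasMinimalPivot

theorem exists_mul_mul_eq_smithNormalForm [IsDomain R] [IsPrincipalIdealRing R]
    (M : Matrix (Fin 2) (Fin 2) R) :
    ∃ (P Q : SL(2, R)) (d e : R), P.1 * M * Q.1 = !![d, 0; 0, d * e] := by
  obtain ⟨P, Q, hmin⟩ := exists_hasMinimalPivot_mul_mul M
  obtain ⟨P', Q', b, hdiag⟩ := hmin.exists_mul_mul_eq_diagonal
  have hmin' := hmin.mul_mul P' Q' (by rw [hdiag]; rfl)
  rw [hdiag] at hmin'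
  obtain ⟨e, rfl⟩ := hmin'.dvd_of_diagonal
  exact ⟨P' * P, Q * Q', _, e, (coe_mul_mul_coe_mul P' P Q Q' M).trans hdiag⟩

end SmithNormalForm

section Isometry

/-- The bilinear form of the orthogonal sum of two hyperbolic planes over `R`, in the same
coordinates as `B`. -/
def twoHyperbolicForm (x y : Fin 4 → R) : R := x 0 * y 1 + x 1 * y 0 + x 2 * y 3 + x 3 * y 2

variable (R) in
/-- The identification of `R⁴` with `2 × 2` matrices; the signs and positions are chosen so that
the determinant becomes `x 0 * x 1 + x 2 * x 3`. -/
def toMatrixFinTwo : (Fin 4 → R) ≃ₗ[R] Matrix (Fin 2) (Fin 2) R where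
  toFun x := !![x 0, -x 2; x 3, x 1]
  invFun A := ![A 0 0, A 1 1, -A 0 1, A 1 0]
  map_add' x y := by simp [add_comm]
  map_smul' c x := by simp
  left_inv x := by ext i; fin_cases i <;> simp
  right_inv A := by simp [← eta_fin_two]

theorem polar_det_toMatrixFinTwo (x y : Fin 4 → R) :
    QuadraticMap.polar det (toMatrixFinTwo R x) (toMatrixFinTwo R y) = twoHyperbolicForm x y := by
  simp only [QuadraticMap.polar, ← map_add]
  simp [toMatrixFinTwo, twoHyperbolicForm, det_fin_two]
  ring

variable {n : Type*} [Fintype n] [DecidableEq n]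

/-- The linear automorphism `A ↦ P * A * Q` of the space of square matrices. -/
def mulLeftRightEquiv (P Q : SpecialLinearGroup n R) : Matrix n n R ≃ₗ[R] Matrix n n R :=
  (Units.mulLeftLinearEquiv R _ (P : GL n R)).trans (Units.mulRightLinearEquiv R (Q : GL n R))

theorem mulLeftRightEquiv_apply (P Q : SpecialLinearGroup n R) (A : Matrix n n R) :
    mulLeftRightEquiv P Q A = P * A * Q :=
  rfl

theorem polar_det_mulLeftRightEquiv (P Q : SpecialLinearGroup n R) (A A' : Matrix n n R) :
    QuadraticMap.polar det (mulLeftRightEquiv P Q A) (mulLeftRightEquiv P Q A') =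
      QuadraticMap.polar det A A' := by
  have hdet (C : Matrix n n R) : (mulLeftRightEquiv P Q C).det = C.det := by
    simp [mulLeftRightEquiv_apply]
  simp only [QuadraticMap.polar, ← map_add, hdet]

/-- The automorphism of `R⁴` that `A ↦ P * A * Q` induces through `toMatrixFinTwo`. -/
def isometryOfSL (P Q : SL(2, R)) : (Fin 4 → R) ≃ₗ[R] (Fin 4 → R) :=
  (toMatrixFinTwo R).trans ((mulLeftRightEquiv P Q).trans (toMatrixFinTwo R).symm)

theorem toMatrixFinTwo_isometryOfSL (P Q : SL(2, R)) (x : Fin 4 → R) :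
    toMatrixFinTwo R (isometryOfSL P Q x) = mulLeftRightEquiv P Q (toMatrixFinTwo R x) := by
  simp [isometryOfSL]

theorem twoHyperbolicForm_isometryOfSL (P Q : SL(2, R)) (x y : Fin 4 → R) :
    twoHyperbolicForm (isometryOfSL P Q x) (isometryOfSL P Q y) = twoHyperbolicForm x y := by
  simp only [← polar_det_toMatrixFinTwo, toMatrixFinTwo_isometryOfSL, polar_det_mulLeftRightEquiv]

end Isometry

theorem stmt_1_general [IsDomain R] [IsPrincipalIdealRing R] (v : Fin 4 → R) :
    ∃ (d e : R) (f : (Fin 4 → R) ≃ₗ[R] (Fin 4 → R)),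
      (∀ x y, twoHyperbolicForm (f x) (f y) = twoHyperbolicForm x y) ∧
        f v = ![d, d * e, 0, 0] := by
  obtain ⟨P, Q, d, e, hsmith⟩ := exists_mul_mul_eq_smithNormalForm (toMatrixFinTwo R v)
  refine ⟨d, e, isometryOfSL P Q, twoHyperbolicForm_isometryOfSL P Q, ?_⟩
  apply (toMatrixFinTwo R).injective
  rw [toMatrixFinTwo_isometryOfSL, mulLeftRightEquiv_apply, hsmith]
  simp [toMatrixFinTwo]

/-- For every vector `v = (a₁,a₂,a₃,a₄) ∈ U ⊕ U` there exist integers `d`, `e` and an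
isometry `f` of `U ⊕ U` with `f v = (d, d·e, 0, 0)`. -/
theorem stmt_1 (v : Fin 4 → ℤ) :
    ∃ (d e : ℤ) (f : (Fin 4 → ℤ) ≃ₗ[ℤ] (Fin 4 → ℤ)),
      (∀ x y, B (f x) (f y) = B x y) ∧ f v = ![d, d * e, 0, 0] :=
  stmt_1_general v

end Stmt1
end

section
/- For all integers a₁, a₂, with d := gcd(a₁,a₂), there exist an integer e with d²·e = a₁·a₂ and an isometry f of U ⊕ U such that f(a₁,a₂,0,0) = (d, d·e, 0, 0). -/
namespace Stmt2

/-- The bilinear form of `U ⊕ U` on `ℤ⁴`: the orthogonal sum of two hyperbolic planes. -/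
def B (x y : Fin 4 → ℤ) : ℤ := x 0 * y 1 + x 1 * y 0 + x 2 * y 3 + x 3 * y 2

/-!
The quadratic form `x₀x₁ + x₂x₃` of `U ⊕ U` is the determinant on `2 × 2` matrices, so
`X ↦ P * X * Q` is an isometry for all `P, Q` in `SL₂`. The vector `(a₁, a₂, 0, 0)` is the diagonal
matrix `diag(a₁, a₂)`, and such `P, Q` bring it to its Smith normal form `diag(d, d * e)`.
-/

section CommSemiring

variable {R : Type*} [CommSemiring R]

variable (R) in
/-- The linear automorphism `x ↦ u * x * v` of an algebra, for units `u` and `v`. -/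
def mulLeftRightEquiv {A : Type*} [Semiring A] [Algebra R A] (u v : Aˣ) : A ≃ₗ[R] A :=
  .ofLinearMap (.mulLeftRight R (↑u, ↑v)) (.mulLeftRight R (↑u⁻¹, ↑v⁻¹))
    (LinearMap.ext fun x ↦ by simp [mul_assoc]) (LinearMap.ext fun x ↦ by simp [mul_assoc])

theorem mulLeftRightEquiv_apply {A : Type*} [Semiring A] [Algebra R A] (u v : Aˣ) (x : A) :
    mulLeftRightEquiv R u v x = u * x * v := rfl

theorem polar_isometryEquiv_apply {M₁ M₂ N : Type*} [AddCommGroup M₁] [AddCommGroup M₂]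
    [AddCommGroup N] [Module R M₁] [Module R M₂] [Module R N] {Q₁ : QuadraticMap R M₁ N}
    {Q₂ : QuadraticMap R M₂ N} (f : Q₁.IsometryEquiv Q₂) (x y : M₁) :
    QuadraticMap.polar Q₂ (f x) (f y) = QuadraticMap.polar Q₁ x y := by
  simp only [QuadraticMap.polar, ← map_add, f.map_app]

end CommSemiring

section CommRing

open scoped MatrixGroups

variable {R : Type*} [CommRing R]

theorem exists_isCoprime_of_span_pair_eq_span_singleton [NoZeroDivisors R] {a₁ a₂ d : R}
    (h : Ideal.span {a₁, a₂} = Ideal.span {d}) :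
    ∃ p q : R, IsCoprime p q ∧ a₁ = d * p ∧ a₂ = d * q := by
  obtain ⟨p, rfl⟩ : d ∣ a₁ := Ideal.mem_span_singleton.mp (h ▸ Ideal.subset_span (by simp))
  obtain ⟨q, rfl⟩ : d ∣ a₂ := Ideal.mem_span_singleton.mp (h ▸ Ideal.subset_span (by simp))
  rcases eq_or_ne d 0 with rfl | hd
  · exact ⟨1, 0, isCoprime_one_left, by simp, by simp⟩
  · obtain ⟨s, t, hst⟩ := Ideal.mem_span_pair.mp (h ▸ Ideal.mem_span_singleton_self d)
    have bezout : s * p + t * q = 1 := mul_left_cancel₀ hd (by linear_combination hst)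
    exact ⟨p, q, ⟨s, t, bezout⟩, rfl, rfl⟩

theorem exists_specialLinearGroup_mul_diagonal_mul_eq {p q : R} (h : IsCoprime p q) (d : R) :
    ∃ P Q : SL(2, R),
      (P : Matrix (Fin 2) (Fin 2) R) * !![d * p, 0; 0, d * q] * Q = !![d, 0; 0, d * (p * q)] := by
  obtain ⟨s, t, hst⟩ := h
  -- The sum of the two rows is `d • (p, q)`, and `Q` sends the row `(p, q)` to `(1, 0)`.
  refine ⟨⟨!![1, 1; -(t * q), s * p], ?_⟩, ⟨!![s, -q; t, p], ?_⟩, ?_⟩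
  · rw [Matrix.det_fin_two_of]
    linear_combination hst
  · rw [Matrix.det_fin_two_of]
    linear_combination hst
  · simp only [Matrix.mul_fin_two]
    congrm !![?_, ?_; ?_, ?_]
    · linear_combination d * hst
    · ring
    · ring
    · linear_combination d * p * q * hst

variable (R) in
/-- The quadratic form `x₀x₁ + x₂x₃` of `U ⊕ U` over `R`; the bilinear form of `U ⊕ U` is its
polarization. -/
def hyperbolicSum : QuadraticForm R (Fin 4 → R) := .proj 0 1 + .proj 2 3

variable (R) in
/-- The identification of `R⁴` with `2 × 2` matrices, with signs chosen so that the determinant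
becomes the quadratic form of `U ⊕ U`. -/
def finFourEquivMatrix : (Fin 4 → R) ≃ₗ[R] Matrix (Fin 2) (Fin 2) R where
  toFun x := !![x 0, -x 2; x 3, x 1]
  invFun X := ![X 0 0, X 1 1, -X 0 1, X 1 0]
  map_add' x y := by ext i j; fin_cases i <;> fin_cases j <;> simp [add_comm]
  map_smul' r x := by ext i j; fin_cases i <;> fin_cases j <;> simp
  left_inv x := by ext i; fin_cases i <;> simp
  right_inv X := by ext i j; fin_cases i <;> fin_cases j <;> simp

theorem finFourEquivMatrix_apply (x : Fin 4 → R) :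
    finFourEquivMatrix R x = !![x 0, -x 2; x 3, x 1] := rfl

theorem det_finFourEquivMatrix (x : Fin 4 → R) :
    (finFourEquivMatrix R x).det = hyperbolicSum R x := by
  simp [finFourEquivMatrix_apply, hyperbolicSum, Matrix.det_fin_two_of]

/-- The isometry of `U ⊕ U` induced by `X ↦ P * X * Q` on `2 × 2` matrices. -/
def specialLinearIsometryEquiv (P Q : SL(2, R)) :
    (hyperbolicSum R).IsometryEquiv (hyperbolicSum R) where
  __ := finFourEquivMatrix R ≪≫ₗ mulLeftRightEquiv R (P : GL (Fin 2) R) Q ≪≫ₗ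
    (finFourEquivMatrix R).symm
  map_app' x := by simp [← det_finFourEquivMatrix, mulLeftRightEquiv_apply]

theorem finFourEquivMatrix_specialLinearIsometryEquiv (P Q : SL(2, R)) (x : Fin 4 → R) :
    finFourEquivMatrix R (specialLinearIsometryEquiv P Q x) = P * finFourEquivMatrix R x * Q :=
  (finFourEquivMatrix R).apply_symm_apply _

theorem exists_isometryEquiv_hyperbolicSum_of_isCoprime {p q : R} (h : IsCoprime p q) (d : R) :
    ∃ f : (hyperbolicSum R).IsometryEquiv (hyperbolicSum R),
      f ![d * p, d * q, 0, 0] = ![d, d * (p * q), 0, 0] := by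
  obtain ⟨P, Q, hPQ⟩ := exists_specialLinearGroup_mul_diagonal_mul_eq h d
  refine ⟨specialLinearIsometryEquiv P Q, (finFourEquivMatrix R).injective ?_⟩
  rw [finFourEquivMatrix_specialLinearIsometryEquiv]
  simpa [finFourEquivMatrix_apply] using hPQ

theorem stmt_2_general [NoZeroDivisors R] {a₁ a₂ d : R}
    (h : Ideal.span {a₁, a₂} = Ideal.span {d}) :
    ∃ e : R, d ^ 2 * e = a₁ * a₂ ∧
      ∃ f : (hyperbolicSum R).IsometryEquiv (hyperbolicSum R),
        f ![a₁, a₂, 0, 0] = ![d, d * e, 0, 0] := by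
  obtain ⟨p, q, hpq, rfl, rfl⟩ := exists_isCoprime_of_span_pair_eq_span_singleton h
  exact ⟨p * q, by ring, exists_isometryEquiv_hyperbolicSum_of_isCoprime hpq d⟩

end CommRing

theorem B_eq_polar_hyperbolicSum (x y : Fin 4 → ℤ) :
    B x y = QuadraticMap.polar (hyperbolicSum ℤ) x y := by
  simp only [B, hyperbolicSum, QuadraticMap.polar, add_apply, QuadraticMap.proj_apply,
    Pi.add_apply]
  ring

theorem B_isometryEquiv_apply (f : (hyperbolicSum ℤ).IsometryEquiv (hyperbolicSum ℤ))
    (x y : Fin 4 → ℤ) : B (f x) (f y) = B x y := by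
  simp only [B_eq_polar_hyperbolicSum, polar_isometryEquiv_apply]

theorem span_pair_eq_span_int_gcd (a b : ℤ) :
    Ideal.span {a, b} = Ideal.span {(Int.gcd a b : ℤ)} := by
  rw [Int.coe_gcd, span_gcd]

/-- For all integers `a₁`, `a₂` with `d = gcd(a₁,a₂)`, there exist an integer `e` with
`d²e = a₁a₂` and an isometry of `U ⊕ U` sending `(a₁,a₂,0,0)` to `(d, d·e, 0, 0)`. -/
theorem stmt_2 (a₁ a₂ : ℤ) :
    ∃ e : ℤ, (Int.gcd a₁ a₂ : ℤ) ^ 2 * e = a₁ * a₂ ∧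
      ∃ f : (Fin 4 → ℤ) ≃ₗ[ℤ] (Fin 4 → ℤ),
        (∀ x y, B (f x) (f y) = B x y) ∧
        f ![a₁, a₂, 0, 0] = ![(Int.gcd a₁ a₂ : ℤ), (Int.gcd a₁ a₂ : ℤ) * e, 0, 0] := by
  obtain ⟨e, he, f, hf⟩ := stmt_2_general (span_pair_eq_span_int_gcd a₁ a₂)
  exact ⟨e, he, f.toLinearEquiv, B_isometryEquiv_apply f, hf⟩

end Stmt2
end

section
/- Let m be an integer. For every primitive vector v = (a₀,a₁,a₂,a₃,a₄) ∈ ℤ⁵ there exist integers a, b, e and an isometry f of T_{2m} such that f(v) = (a, b, b·e, 0, 0), and this image vector is again primitive. -/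
/-!
The lattice `U ⊕ U` is the space of `2 × 2` matrices with the polar form of the determinant, so
`(P, Q) : SL₂ × SL₂` acts on it by isometries `X ↦ P * X * Q`. The Smith normal form
`diag(b, b * e)` of a matrix is the vector `(b, b * e, 0, 0)` of `U ⊕ U`. It is reached by making
the corner entry of `P * A * Q` minimal for divisibility, which forces it to divide all the others.
-/

namespace Stmt3

/-- The bilinear form of `T_{2m} = ⟨-2m⟩ ⊕ U ⊕ U` on `ℤ⁵`. -/
def B (m : ℤ) (x y : Fin 5 → ℤ) : ℤ :=
  -2 * m * (x 0 * y 0) + x 1 * y 2 + x 2 * y 1 + x 3 * y 4 + x 4 * y 3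

/-- A vector of `ℤⁿ` is primitive if the gcd of its coordinates is `1`. -/
def IsPrimitive {n : ℕ} (v : Fin n → ℤ) : Prop := Finset.univ.gcd v = 1

section Gcd

variable {R ι κ : Type*} [CommSemiring R] [NormalizedGCDMonoid R] [Fintype ι] [Fintype κ]

theorem gcd_dvd_gcd_linearMap (f : (ι → R) →ₗ[R] (κ → R)) (v : ι → R) :
    Finset.univ.gcd v ∣ Finset.univ.gcd (f v) := by
  choose u hu using fun i => Finset.gcd_dvd (f := v) (Finset.mem_univ i)
  have hv : v = Finset.univ.gcd v • u := funext hu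
  refine Finset.dvd_gcd fun j _ => ⟨f u j, ?_⟩
  simpa only [map_smul, Pi.smul_apply, smul_eq_mul] using congrFun (congrArg f hv) j

theorem gcd_linearEquiv (f : (ι → R) ≃ₗ[R] (κ → R)) (v : ι → R) :
    Finset.univ.gcd (f v) = Finset.univ.gcd v := by
  refine dvd_antisymm_of_normalize_eq Finset.normalize_gcd Finset.normalize_gcd ?_
    (gcd_dvd_gcd_linearMap f.toLinearMap v)
  simpa using gcd_dvd_gcd_linearMap f.symm.toLinearMap (f v)

end Gcd

section SmithNormalForm

open Matrix
open scoped MatrixGroups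

variable {R : Type*} [CommRing R]

theorem exists_isCoprime_mul_add_mul_dvd [IsDomain R] [IsBezout R] (a b : R) :
    ∃ s t : R, IsCoprime s t ∧ s * a + t * b ∣ a ∧ s * a + t * b ∣ b := by
  obtain ⟨s, t, hg⟩ := IsBezout.gcd_eq_sum a b
  obtain ⟨a', ha⟩ := IsBezout.gcd_dvd_left a b
  obtain ⟨b', hb⟩ := IsBezout.gcd_dvd_right a b
  by_cases h0 : IsBezout.gcd a b = 0
  · rw [h0, zero_mul] at ha hb
    exact ⟨1, 0, isCoprime_one_left, by simp [ha, hb]⟩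
  · refine ⟨s, t, ⟨a', b', mul_left_cancel₀ h0 ?_⟩, hg ▸ ⟨a', ha⟩, hg ▸ ⟨b', hb⟩⟩
    linear_combination hg - s * ha - t * hb

/-- The corner entry of `A` is minimal for divisibility among the corner entries of the matrices
`P * A * Q` with `P`, `Q` of determinant one. -/
def IsCornerMinimal (A : Matrix (Fin 2) (Fin 2) R) : Prop :=
  ∀ P Q : SL(2, R), (P.1 * A * Q.1) 0 0 ∣ A 0 0 → A 0 0 ∣ (P.1 * A * Q.1) 0 0

theorem exists_isCornerMinimal_mul_mul [WfDvdMonoid R] (A : Matrix (Fin 2) (Fin 2) R) :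
    ∃ P Q : SL(2, R), IsCornerMinimal (P.1 * A * Q.1) := by
  obtain ⟨_, ⟨⟨P, Q⟩, rfl⟩, hmin⟩ := wellFounded_dvdNotUnit.has_min
    (Set.range fun PQ : SL(2, R) × SL(2, R) => (PQ.1.1 * A * PQ.2.1) 0 0) (Set.range_nonempty _)
  refine ⟨P, Q, fun P' Q' hdvd => ?_⟩
  by_contra hndvd
  refine hmin _ ⟨(P' * P, Q * Q'), ?_⟩ (dvdNotUnit_of_dvd_of_not_dvd hdvd hndvd)
  simp only [Matrix.SpecialLinearGroup.coe_mul, Matrix.mul_assoc]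

namespace IsCornerMinimal

variable {A : Matrix (Fin 2) (Fin 2) R}

theorem transpose (hA : IsCornerMinimal A) : IsCornerMinimal Aᵀ := fun P Q => by
  have htranspose : Q.1ᵀ * A * P.1ᵀ = (P.1 * Aᵀ * Q.1)ᵀ := by
    simp only [transpose_mul, transpose_transpose, Matrix.mul_assoc]
  have hdvd := hA Q.transpose P.transpose
  simpa only [Matrix.SpecialLinearGroup.coe_transpose, htranspose, transpose_apply] using hdvd

theorem mul_mul_of_corner_eq (hA : IsCornerMinimal A) {P Q : SL(2, R)}
    (h : (P.1 * A * Q.1) 0 0 = A 0 0) : IsCornerMinimal (P.1 * A * Q.1) := fun P' Q' => by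
  simpa only [Matrix.SpecialLinearGroup.coe_mul, Matrix.mul_assoc, h] using hA (P' * P) (Q * Q')

variable [IsDomain R] [IsBezout R]

theorem dvd_one_zero (hA : IsCornerMinimal A) : A 0 0 ∣ A 1 0 := by
  obtain ⟨s, t, hst, hdvd₀, hdvd₁⟩ := exists_isCoprime_mul_add_mul_dvd (A 0 0) (A 1 0)
  obtain ⟨P, hs, ht⟩ := hst.exists_SL2_row 0
  have hcorner : (P.1 * A * (1 : SL(2, R)).1) 0 0 = s * A 0 0 + t * A 1 0 := by
    simp [Matrix.mul_apply, hs, ht]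
  exact (hcorner ▸ hA P 1 (hcorner ▸ hdvd₀)).trans hdvd₁

theorem dvd_zero_one (hA : IsCornerMinimal A) : A 0 0 ∣ A 0 1 :=
  hA.transpose.dvd_one_zero

theorem dvd_one_one (hA : IsCornerMinimal A) : A 0 0 ∣ A 1 1 := by
  obtain ⟨p, hp⟩ := hA.dvd_one_zero
  -- The row `(1 - p, 1)` keeps the corner and brings `A 1 1` into the first row.
  obtain ⟨P, hs, ht⟩ := (isCoprime_one_right (x := 1 - p)).exists_SL2_row 0
  have hrow (j : Fin 2) : (P.1 * A * (1 : SL(2, R)).1) 0 j = (1 - p) * A 0 j + A 1 j := by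
    rw [Matrix.SpecialLinearGroup.coe_one, Matrix.mul_one]
    simp [Matrix.mul_apply, hs, ht]
  have hcorner : (P.1 * A * (1 : SL(2, R)).1) 0 0 = A 0 0 := by
    linear_combination hrow 0 + hp
  have hdvd := (hA.mul_mul_of_corner_eq hcorner).dvd_zero_one
  rw [hcorner, hrow] at hdvd
  exact (dvd_add_right (hA.dvd_zero_one.mul_left _)).1 hdvd

theorem exists_mul_mul_eq_diagonal (hA : IsCornerMinimal A) :
    ∃ (P Q : SL(2, R)) (b e : R), P.1 * A * Q.1 = diagonal ![b, b * e] := by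
  obtain ⟨p, hp⟩ := hA.dvd_one_zero
  obtain ⟨q, hq⟩ := hA.dvd_zero_one
  obtain ⟨r, hr⟩ := hA.dvd_one_one
  refine ⟨⟨!![1, 0; -p, 1], by simp⟩, ⟨!![1, -q; 0, 1], by simp⟩, A 0 0, r - p * q, ?_⟩
  rw [eta_fin_two A, hp, hq, hr]
  ext i j
  fin_cases i <;> fin_cases j <;> simp <;> ring

end IsCornerMinimal

theorem exists_SL2_mul_mul_eq_diagonal [IsDomain R] [IsPrincipalIdealRing R]
    (A : Matrix (Fin 2) (Fin 2) R) :
    ∃ (P Q : SL(2, R)) (b e : R), P.1 * A * Q.1 = diagonal ![b, b * e] := by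
  obtain ⟨P, Q, hmin⟩ := exists_isCornerMinimal_mul_mul A
  obtain ⟨P', Q', b, e, h⟩ := hmin.exists_mul_mul_eq_diagonal
  refine ⟨P' * P, Q * Q', b, e, ?_⟩
  simpa only [Matrix.SpecialLinearGroup.coe_mul, Matrix.mul_assoc] using h

end SmithNormalForm

section Isometry

open Matrix
open scoped MatrixGroups

variable {R : Type*} [CommRing R]

/-- The bilinear form of `⟨c⟩ ⊕ U ⊕ U` on `R⁵`; the form of `T_{2m}` is the case `c = -2m`. -/
def planesForm (c : R) (x y : Fin 5 → R) : R :=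
  c * (x 0 * y 0) + x 1 * y 2 + x 2 * y 1 + x 3 * y 4 + x 4 * y 3

/-- The coordinates identifying `⟨c⟩ ⊕ U ⊕ U` with the sum of `⟨c⟩` and the `2 × 2` matrices; the
sign makes the quadratic form `x₁x₂ + x₃x₄` of `U ⊕ U` the determinant. -/
def matrixCoords : (Fin 5 → R) ≃ₗ[R] R × Matrix (Fin 2) (Fin 2) R where
  toFun x := (x 0, !![x 1, -x 3; x 4, x 2])
  invFun y := ![y.1, y.2 0 0, y.2 1 1, -y.2 0 1, y.2 1 0]
  map_add' x y := by simp [add_comm]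
  map_smul' r x := by simp
  left_inv x := by ext i; fin_cases i <;> simp
  right_inv y := by
    refine Prod.ext rfl ?_
    ext i j
    fin_cases i <;> fin_cases j <;> simp

theorem planesForm_eq_polar_det (c : R) (x y : Fin 5 → R) :
    planesForm c x y = c * ((matrixCoords x).1 * (matrixCoords y).1) +
      QuadraticMap.polar det (matrixCoords x).2 (matrixCoords y).2 := by
  simp only [planesForm, matrixCoords, LinearEquiv.coe_mk, LinearMap.coe_mk, AddHom.coe_mk,
    QuadraticMap.polar, of_add_of, add_cons, head_cons, tail_cons, empty_add_empty, det_fin_two_of]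
  ring

theorem matrixCoords_symm_diagonal (a b d : R) :
    matrixCoords.symm (a, diagonal ![b, d]) = ![a, b, d, 0, 0] := by
  simp [matrixCoords]

section

variable {n : Type*} [Fintype n] [DecidableEq n]

theorem polar_det_mul_mul (P Q : Matrix.SpecialLinearGroup n R) (X Y : Matrix n n R) :
    QuadraticMap.polar det (P.1 * X * Q.1) (P.1 * Y * Q.1) = QuadraticMap.polar det X Y := by
  simp [QuadraticMap.polar, ← Matrix.add_mul, ← Matrix.mul_add]

/-- The two-sided multiplication `X ↦ P * X * Q`. -/
def mulMulEquiv (P Q : Matrix.SpecialLinearGroup n R) : Matrix n n R ≃ₗ[R] Matrix n n R :=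
  (Units.mulLeftLinearEquiv R _ (P : GL n R)).trans (Units.mulRightLinearEquiv R (Q : GL n R))

theorem mulMulEquiv_apply (P Q : Matrix.SpecialLinearGroup n R) (X : Matrix n n R) :
    mulMulEquiv P Q X = P.1 * X * Q.1 :=
  rfl

end

/-- The action of `(P, Q)` on `⟨c⟩ ⊕ U ⊕ U`: trivial on `⟨c⟩`, and `X ↦ P * X * Q` on `U ⊕ U`. -/
def planesIsometry (P Q : SL(2, R)) : (Fin 5 → R) ≃ₗ[R] (Fin 5 → R) :=
  matrixCoords.trans
    (((LinearEquiv.refl R R).prodCongr (mulMulEquiv P Q)).trans matrixCoords.symm)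

theorem matrixCoords_planesIsometry (P Q : SL(2, R)) (x : Fin 5 → R) :
    matrixCoords (planesIsometry P Q x) =
      ((matrixCoords x).1, P.1 * (matrixCoords x).2 * Q.1) := by
  simp [planesIsometry, mulMulEquiv_apply]

theorem planesForm_planesIsometry (c : R) (P Q : SL(2, R)) (x y : Fin 5 → R) :
    planesForm c (planesIsometry P Q x) (planesIsometry P Q y) = planesForm c x y := by
  simp only [planesForm_eq_polar_det, matrixCoords_planesIsometry, polar_det_mul_mul]

theorem exists_planesIsometry_apply_eq [IsDomain R] [IsPrincipalIdealRing R] (v : Fin 5 → R) :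
    ∃ (P Q : SL(2, R)) (b e : R), planesIsometry P Q v = ![v 0, b, b * e, 0, 0] := by
  obtain ⟨P, Q, b, e, hdiag⟩ := exists_SL2_mul_mul_eq_diagonal (matrixCoords v).2
  refine ⟨P, Q, b, e, ?_⟩
  rw [← matrixCoords_symm_diagonal, LinearEquiv.eq_symm_apply, matrixCoords_planesIsometry, hdiag]
  rfl

end Isometry

theorem stmt_3_general {R : Type*} [CommRing R] [IsDomain R] [IsPrincipalIdealRing R]
    [NormalizedGCDMonoid R] (c : R) (v : Fin 5 → R) :
    ∃ (a b e : R) (f : (Fin 5 → R) ≃ₗ[R] (Fin 5 → R)),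
      (∀ x y, planesForm c (f x) (f y) = planesForm c x y) ∧
      f v = ![a, b, b * e, 0, 0] ∧
      Finset.univ.gcd ![a, b, b * e, 0, 0] = Finset.univ.gcd v := by
  obtain ⟨P, Q, b, e, hv⟩ := exists_planesIsometry_apply_eq v
  exact ⟨v 0, b, e, planesIsometry P Q, planesForm_planesIsometry c P Q, hv,
    hv ▸ gcd_linearEquiv (planesIsometry P Q) v⟩

/-- Every primitive vector of `T_{2m}` is mapped by some isometry of `T_{2m}` to a
primitive vector of the form `(a, b, b·e, 0, 0)`. -/
theorem stmt_3 (m : ℤ) (v : Fin 5 → ℤ) (hv : IsPrimitive v) :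
    ∃ (a b e : ℤ) (f : (Fin 5 → ℤ) ≃ₗ[ℤ] (Fin 5 → ℤ)),
      (∀ x y, B m (f x) (f y) = B m x y) ∧
      f v = ![a, b, b * e, 0, 0] ∧ IsPrimitive ![a, b, b * e, 0, 0] := by
  obtain ⟨a, b, e, f, hf, hfv, hgcd⟩ := stmt_3_general (-2 * m) v
  exact ⟨a, b, e, f, hf, hfv, hgcd.trans hv⟩

end Stmt3
end

section
/- Let d be a positive integer. For all integers a and c there exists an isometry of 𝒜_{2d} which sends the vector (a, 1, c) to the vector (0, 1, r), where r = c − d·a². -/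
namespace Stmt4

/-- The bilinear form of `𝒜_{2d} = ⟨-2d⟩ ⊕ U` on `ℤ³`. -/
def B (d : ℤ) (x y : Fin 3 → ℤ) : ℤ := -2 * d * (x 0 * y 0) + x 1 * y 2 + x 2 * y 1

/-!
The lattice is even, so `B d` is the polar form of the quadratic form `x₁x₂ - d x₀²`. The isometry
is the Eichler transvection attached to the isotropic vector `e = (0, 0, 1)` and to
`v = (-a, 0, 0) ∈ e^⊥`: a vector `x` with `⟨e, x⟩ = 1`, such as `(a, 1, c)`, is translated by `v` up
to a multiple of `e`, which clears its coordinate in `⟨-2d⟩`.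
-/

open QuadraticMap

section EichlerTransvection

variable {R M : Type*} [CommRing R] [AddCommGroup M] [Module R M]

/-- The Eichler transvection `x ↦ x + ⟨e, x⟩ v - (⟨v, x⟩ + Q v ⟨e, x⟩) e`, where `⟨·, ·⟩` is the
polar form of `Q`. It is defined for all `e` and `v`, but is an isometry only under conditions such
as `Q e = 0` and `⟨e, v⟩ = 0`. Using `Q v` for `⟨v, v⟩ / 2` avoids dividing by two. -/
def eichlerTransvection (Q : QuadraticForm R M) (e v : M) : M →ₗ[R] M :=
  LinearMap.id + (Q.polarBilin e).smulRight v
    - (Q.polarBilin v + Q v • Q.polarBilin e).smulRight e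

variable {Q : QuadraticForm R M} {e v w : M}

theorem eichlerTransvection_apply (x : M) :
    eichlerTransvection Q e v x =
      x + polar Q e x • v - (polar Q v x + Q v * polar Q e x) • e :=
  rfl

theorem eichlerTransvection_zero : eichlerTransvection Q e 0 = LinearMap.id := by
  ext x
  simp [eichlerTransvection_apply]

theorem polar_self_of_isotropic (he : Q e = 0) : polar Q e e = 0 := by
  rw [polar_self, he, smul_zero]

theorem polar_eichlerTransvection_left (he : Q e = 0) (hv : polar Q e v = 0) (x : M) :
    polar Q e (eichlerTransvection Q e v x) = polar Q e x := by
  simp [eichlerTransvection_apply, polar_add_right, polar_sub_right, polar_smul_right,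
    polar_self_of_isotropic he, hv]

theorem polar_eichlerTransvection_of_orthogonal (hw : polar Q e w = 0) (x : M) :
    polar Q w (eichlerTransvection Q e v x) = polar Q w x + polar Q e x * polar Q w v := by
  simp [eichlerTransvection_apply, polar_add_right, polar_sub_right, polar_smul_right,
    polar_comm Q w e, hw]

theorem map_eichlerTransvection (he : Q e = 0) (hv : polar Q e v = 0) (x : M) :
    Q (eichlerTransvection Q e v x) = Q x := by
  rw [eichlerTransvection_apply, sub_eq_add_neg, ← neg_smul, QuadraticMap.map_add Q,
    QuadraticMap.map_add Q]
  simp only [QuadraticMap.map_smul, polar_add_left, polar_smul_left, polar_smul_right, smul_eq_mul,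
    he, polar_comm Q v e, hv, polar_comm Q x]
  ring

theorem eichlerTransvection_comp (he : Q e = 0) (hv : polar Q e v = 0) (hw : polar Q e w = 0) :
    eichlerTransvection Q e w ∘ₗ eichlerTransvection Q e v = eichlerTransvection Q e (v + w) := by
  ext x
  rw [LinearMap.comp_apply, eichlerTransvection_apply (v := w),
    polar_eichlerTransvection_left he hv, polar_eichlerTransvection_of_orthogonal hw,
    eichlerTransvection_apply, eichlerTransvection_apply, QuadraticMap.map_add Q v w,
    polar_add_left, polar_comm Q w v]
  module

theorem eichlerTransvection_neg_comp (he : Q e = 0) (hv : polar Q e v = 0) :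
    eichlerTransvection Q e (-v) ∘ₗ eichlerTransvection Q e v = LinearMap.id := by
  rw [eichlerTransvection_comp he hv (by rw [polar_neg_right, hv, neg_zero]), add_neg_cancel,
    eichlerTransvection_zero]

/-- The Eichler transvection of an isotropic vector `e` and a vector `v` orthogonal to `e`, as an
isometry of `Q`; its inverse is the transvection of `e` and `-v`. -/
def eichlerIsometry (he : Q e = 0) (hv : polar Q e v = 0) : Q.IsometryEquiv Q where
  toLinearEquiv :=
    LinearEquiv.ofLinearMap (eichlerTransvection Q e v) (eichlerTransvection Q e (-v))
      (by simpa only [neg_neg] using eichlerTransvection_neg_comp (v := -v) he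
            (by rw [polar_neg_right, hv, neg_zero]))
      (eichlerTransvection_neg_comp he hv)
  map_app' := map_eichlerTransvection he hv

end EichlerTransvection

theorem polar_isometryEquiv_apply {R M₁ M₂ N : Type*} [CommRing R] [AddCommGroup M₁]
    [AddCommGroup M₂] [AddCommGroup N] [Module R M₁] [Module R M₂] [Module R N]
    {Q₁ : QuadraticMap R M₁ N} {Q₂ : QuadraticMap R M₂ N} (f : Q₁.IsometryEquiv Q₂) (x y : M₁) :
    polar Q₂ (f x) (f y) = polar Q₁ x y := by
  simp only [polar, ← map_add, IsometryEquiv.map_app]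

section QuadForm

variable {R : Type*} [CommRing R]

/-- The quadratic form `x₁x₂ - d x₀²` on `R³`; over `ℤ` it is the form `x ↦ B d x x / 2` of the even
lattice `𝒜_{2d}`. -/
def quadForm (d : R) : QuadraticForm R (Fin 3 → R) := proj 1 2 - d • proj 0 0

theorem quadForm_apply (d : R) (x : Fin 3 → R) :
    quadForm d x = x 1 * x 2 - d * (x 0 * x 0) :=
  rfl

theorem polar_quadForm (d : R) (x y : Fin 3 → R) :
    polar (quadForm d) x y = -2 * d * (x 0 * y 0) + x 1 * y 2 + x 2 * y 1 := by
  simp only [polar, quadForm_apply, Pi.add_apply]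
  ring

theorem eichlerTransvection_quadForm (d a c : R) :
    eichlerTransvection (quadForm d) ![0, 0, 1] ![-a, 0, 0] ![a, 1, c] =
      ![0, 1, c - d * a ^ 2] := by
  have polar_e : polar (quadForm d) ![0, 0, 1] ![a, 1, c] = 1 := by simp [polar_quadForm]
  have polar_v : polar (quadForm d) ![-a, 0, 0] ![a, 1, c] = 2 * d * a ^ 2 := by
    simp [polar_quadForm, pow_two]
  have map_v : quadForm d ![-a, 0, 0] = -(d * a ^ 2) := by simp [quadForm_apply, pow_two]
  have coeff : 2 * d * a ^ 2 + -(d * a ^ 2) * 1 = d * a ^ 2 := by ring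
  rw [eichlerTransvection_apply, polar_e, polar_v, map_v, coeff]
  simp

theorem stmt_4_general (d a c : R) :
    ∃ f : (quadForm d).IsometryEquiv (quadForm d), f ![a, 1, c] = ![0, 1, c - d * a ^ 2] := by
  have isotropic : quadForm d ![0, 0, 1] = 0 := by simp [quadForm_apply]
  have orthogonal : polar (quadForm d) ![0, 0, 1] ![-a, 0, 0] = 0 := by simp [polar_quadForm]
  exact ⟨eichlerIsometry isotropic orthogonal, eichlerTransvection_quadForm d a c⟩

end QuadForm

theorem polar_quadForm_eq_B (d : ℤ) (x y : Fin 3 → ℤ) : polar (quadForm d) x y = B d x y :=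
  polar_quadForm d x y

theorem B_isometryEquiv_apply {d : ℤ} (f : (quadForm d).IsometryEquiv (quadForm d))
    (x y : Fin 3 → ℤ) : B d (f x) (f y) = B d x y := by
  simpa only [polar_quadForm_eq_B] using polar_isometryEquiv_apply f x y

/-- There is an isometry of `𝒜_{2d}` sending `(a, 1, c)` to `(0, 1, c - d·a²)`. -/
theorem stmt_4 (d : ℤ) (hd : 0 < d) (a c : ℤ) :
    ∃ f : (Fin 3 → ℤ) ≃ₗ[ℤ] (Fin 3 → ℤ),
      (∀ x y, B d (f x) (f y) = B d x y) ∧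
      f ![a, 1, c] = ![0, 1, c - d * a ^ 2] := by
  obtain ⟨f, hf⟩ := stmt_4_general d a c
  exact ⟨f.toLinearEquiv, B_isometryEquiv_apply f, hf⟩

end Stmt4
end

section
/- Let d be a positive integer. For all integers t and h, all integers w ≥ 0 and j with 0 < j ≤ ⌊d/2⌋, and each sign ε ∈ {+1, −1}, there exists an isometry of 𝒜_{2d} which sends the vector (w·h + ε·j, w, w·t) to the vector (j, w, s), where s = −d·w·h² − 2·ε·d·h·j + w·t. -/
/-! The isometry is an Eichler transvection of `⟨-2d⟩ ⊕ U` along the isotropic vector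
`e = (0, 0, 1)`. It fixes the middle coordinate `w` and moves the first one by a multiple of `w`,
so the one attached to `a = (-h, 0, 0)` removes the summand `w * h`, and being an isometry it
determines the new last coordinate. This settles `ε = 1`; for `ε = -1` the sign of `j` is
then corrected by the reflection in `(1, 0, 0)`, which is integral because `-2d` divides
`2 B((1, 0, 0), y)` for every `y`. -/

namespace Stmt5

/-- The bilinear form of `𝒜_{2d} = ⟨-2d⟩ ⊕ U` on `ℤ³`. -/
def B (d : ℤ) (x y : Fin 3 → ℤ) : ℤ := -2 * d * (x 0 * y 0) + x 1 * y 2 + x 2 * y 1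

open QuadraticMap

section Isometries

variable {R M N : Type*} [CommRing R] [AddCommGroup M] [Module R M] [AddCommGroup N] [Module R N]

theorem polar_isometryEquiv {M' : Type*} [AddCommGroup M'] [Module R M']
    {Q : QuadraticMap R M N} {Q' : QuadraticMap R M' N} (f : Q.IsometryEquiv Q') (x y : M) :
    polar Q' (f x) (f y) = polar Q x y := by
  simp only [polar, ← map_add, f.map_app]

/-- The reflection `y ↦ y - f y • v` as an isometry of `Q`. The coroot `f` is passed explicitly,
characterised by `polar Q v y = f y • Q v`, so that `Q v` need not be invertible. -/
def reflectionIsometryEquiv (Q : QuadraticMap R M N) {f : Module.Dual R M} {v : M}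
    (hfv : f v = 2) (hf : ∀ y, polar Q v y = f y • Q v) : Q.IsometryEquiv Q where
  toLinearEquiv := Module.reflection hfv
  map_app' y := by
    change Q (y - f y • v) = Q y
    rw [sub_eq_add_neg, ← neg_smul, QuadraticMap.map_add Q, Q.map_smul, polar_smul_right,
      polar_comm, hf]
    module

theorem reflectionIsometryEquiv_apply (Q : QuadraticMap R M N) {f : Module.Dual R M} {v : M}
    (hfv : f v = 2) (hf : ∀ y, polar Q v y = f y • Q v) (y : M) :
    reflectionIsometryEquiv Q hfv hf y = y - f y • v := rfl

/-- The Eichler (or Siegel) transvection `x ↦ x + b(e, x) a - b(a, x) e - Q(a) b(e, x) e`, where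
`b` is the polar form of `Q`. It is an isometry when `e` is isotropic and orthogonal to `a`. -/
def eichlerTransvection (Q : QuadraticForm R M) (e a : M) : M →ₗ[R] M :=
  LinearMap.id + (Q.polarBilin e).smulRight a -
    (Q.polarBilin a + Q a • Q.polarBilin e).smulRight e

variable {Q : QuadraticForm R M} {e a b : M}

theorem eichlerTransvection_apply (Q : QuadraticForm R M) (e a x : M) :
    eichlerTransvection Q e a x =
      x + polar Q e x • a - (polar Q a x + Q a * polar Q e x) • e := rfl

@[simp]
theorem eichlerTransvection_zero (Q : QuadraticForm R M) (e : M) :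
    eichlerTransvection Q e 0 = LinearMap.id := by
  ext x
  simp [eichlerTransvection_apply]

theorem polar_self_of_map_eq_zero (he : Q e = 0) : polar Q e e = 0 := by
  rw [polar_self, he, smul_zero]

theorem polar_eichlerTransvection_left (he : Q e = 0) (ha : polar Q e a = 0) (x : M) :
    polar Q e (eichlerTransvection Q e a x) = polar Q e x := by
  simp [eichlerTransvection_apply, polar_sub_right, polar_add_right, polar_smul_right, ha,
    polar_self_of_map_eq_zero he]

theorem map_eichlerTransvection (he : Q e = 0) (ha : polar Q e a = 0) (x : M) :
    Q (eichlerTransvection Q e a x) = Q x := by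
  rw [eichlerTransvection_apply, sub_eq_add_neg, ← neg_smul]
  simp only [QuadraticMap.map_add Q, Q.map_smul, polar_add_left, polar_smul_left, polar_smul_right,
    polar_comm Q x, polar_comm Q a e, he, ha, smul_eq_mul]
  ring

theorem eichlerTransvection_comp (he : Q e = 0) (ha : polar Q e a = 0)
    (hb : polar Q e b = 0) :
    eichlerTransvection Q e a ∘ₗ eichlerTransvection Q e b = eichlerTransvection Q e (a + b) := by
  ext x
  rw [LinearMap.comp_apply, eichlerTransvection_apply Q e a, polar_eichlerTransvection_left he hb]
  simp only [eichlerTransvection_apply, polar_sub_right, polar_add_right, polar_smul_right,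
    polar_add_left, polar_comm Q a e, ha, QuadraticMap.map_add Q, smul_eq_mul]
  module

/-- The Eichler transvection as a self-isometry of `Q`, with inverse the transvection attached
to `-a`. -/
def eichlerIsometryEquiv (he : Q e = 0) (ha : polar Q e a = 0) : Q.IsometryEquiv Q where
  toLinearEquiv := .ofLinearMap (eichlerTransvection Q e a) (eichlerTransvection Q e (-a))
    (by rw [eichlerTransvection_comp he ha (by simp [ha]), add_neg_cancel,
      eichlerTransvection_zero])
    (by rw [eichlerTransvection_comp he (by simp [ha]) ha, neg_add_cancel,
      eichlerTransvection_zero])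
  map_app' := map_eichlerTransvection he ha

theorem eichlerIsometryEquiv_apply (he : Q e = 0) (ha : polar Q e a = 0) (x : M) :
    eichlerIsometryEquiv he ha x = eichlerTransvection Q e a x := rfl

end Isometries

section Lattice

variable {R : Type*} [CommRing R]

/-- The quadratic form `-d x₀² + x₁ x₂` on `R³`; over `ℤ` its polar form is the bilinear form of
`𝒜_{2d}`. -/
def latticeForm (d : R) : QuadraticForm R (Fin 3 → R) := proj 1 2 - d • proj 0 0

theorem latticeForm_apply (d : R) (x : Fin 3 → R) :
    latticeForm d x = x 1 * x 2 - d * (x 0 * x 0) := rfl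

theorem polar_latticeForm (d : R) (x y : Fin 3 → R) :
    polar (latticeForm d) x y = -2 * d * (x 0 * y 0) + x 1 * y 2 + x 2 * y 1 := by
  simp only [polar, latticeForm_apply, Pi.add_apply]
  ring

theorem B_eq_polar_latticeForm (d : ℤ) (x y : Fin 3 → ℤ) :
    B d x y = polar (latticeForm d) x y :=
  (polar_latticeForm d x y).symm

/-- The isometry of `latticeForm d` that changes the sign of the coordinate `x₀`, as the reflection
in `(1, 0, 0)`. -/
def signReflection (d : R) : (latticeForm d).IsometryEquiv (latticeForm d) :=
  reflectionIsometryEquiv (latticeForm d) (f := 2 • LinearMap.proj 0) (v := ![1, 0, 0])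
    (by simp) (fun y => by simp [polar_latticeForm, latticeForm_apply]; ring)

theorem signReflection_apply (d x₀ x₁ x₂ : R) :
    signReflection d ![x₀, x₁, x₂] = ![-x₀, x₁, x₂] := by
  rw [signReflection, reflectionIsometryEquiv_apply]
  ext i
  fin_cases i <;> simp [two_mul]

/-- The Eichler transvection of `latticeForm d` attached to `e = (0, 0, 1)` and
`a = (-h, 0, 0)`. -/
def shear (d h : R) : (latticeForm d).IsometryEquiv (latticeForm d) :=
  eichlerIsometryEquiv (e := ![0, 0, 1]) (a := ![-h, 0, 0])
    (by simp [latticeForm_apply]) (by simp [polar_latticeForm])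

theorem shear_apply (d h x₀ x₁ x₂ : R) :
    shear d h ![x₀, x₁, x₂] = ![x₀ - h * x₁, x₁, x₂ - 2 * d * h * x₀ + d * h ^ 2 * x₁] := by
  rw [shear, eichlerIsometryEquiv_apply, eichlerTransvection_apply]
  ext i
  fin_cases i <;> simp [polar_latticeForm, latticeForm_apply] <;> ring

theorem stmt_5_general (d t h w j ε : R) (hε : ε = 1 ∨ ε = -1) :
    ∃ f : (latticeForm d).IsometryEquiv (latticeForm d),
      f ![w * h + ε * j, w, w * t] = ![j, w, -d * w * h ^ 2 - 2 * ε * d * h * j + w * t] := by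
  have shear_eq : shear d h ![w * h + ε * j, w, w * t] =
      ![ε * j, w, -d * w * h ^ 2 - 2 * ε * d * h * j + w * t] := by
    rw [shear_apply]
    ext i
    fin_cases i <;> simp <;> ring
  rcases hε with rfl | rfl
  · exact ⟨shear d h, by rw [shear_eq, one_mul]⟩
  · refine ⟨(shear d h).trans (signReflection d), ?_⟩
    change signReflection d (shear d h _) = _
    rw [shear_eq, signReflection_apply, neg_one_mul, neg_neg]

end Lattice

/-- There is an isometry of `𝒜_{2d}` sending `(w·h ± j, w, w·t)` to `(j, w, s)` with
`s = -d·w·h² ∓ 2d·h·j + w·t`, where `0 < j ≤ ⌊d/2⌋` and `w ≥ 0`. -/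
theorem stmt_5 (d : ℤ) (hd : 0 < d) (t h w j ε : ℤ) (hw : 0 ≤ w)
    (hj₀ : 0 < j) (hj₁ : j ≤ d / 2) (hε : ε = 1 ∨ ε = -1) :
    ∃ f : (Fin 3 → ℤ) ≃ₗ[ℤ] (Fin 3 → ℤ),
      (∀ x y, B d (f x) (f y) = B d x y) ∧
      f ![w * h + ε * j, w, w * t] = ![j, w, -d * w * h ^ 2 - 2 * ε * d * h * j + w * t] := by
  obtain ⟨f, hf⟩ := stmt_5_general d t h w j ε hε
  exact ⟨f, fun x y => by
    simpa only [B_eq_polar_latticeForm, f.coe_toLinearEquiv] using polar_isometryEquiv f x y, hf⟩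

end Stmt5
end

section
/- Let p be a prime number and consider the lattice T_{2p}. Let q = (n, b, b·f, 0, 0) with integers n ≥ 0, b > 0, f, and gcd(n,b) = 1. Then there exists an isometry of T_{2p} sending q to one of the following vectors: (0, 1, r, 0, 0) for some integer r with 2b²f − 2pn² = 2r; or (1, 2, 2s, 0, 0) for some integer s with 2b²f − 2pn² = 8s − 2p; or (l, p, p·t, 0, 0) for some integers l, t with 0 < l ≤ ⌊p/2⌋ and 2b²f − 2pn² = 2p²t − 2pl²; or (j, 2p, 2p·u, 0, 0) for some integers j, u with 0 < j < p, j odd, and 2b²f − 2pn² = 8p²u − 2pj². -/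
/-!
Let `d = gcd(b, 2m)` and `q = (n, b, bc, 0, 0)` with `n` and `b` coprime. Then `d` divides `B(q, x)`
for every `x`, and an isometry preserves this divisibility. An Eichler transvection puts `2mn` next
to `b`, and as `gcd(b, 2mn) = d`, an element of `SL₂(ℤ)` acting on `U ⊕ U` makes the coordinate `x₁`
equal to `d`. All values of `B` at the new vector are still multiples of `d`, so one further
transvection clears `x₃` and `x₄` and adds any prescribed multiple of `d` to `x₀`. With the
reflection `x₀ ↦ -x₀` this brings `q` to `(l, d, dh, 0, 0)` with `0 ≤ l ≤ d / 2` and `l` coprime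
to `d`. For `m = p` prime, the four shapes correspond to `d = 1, 2, p, 2p`, and the norm conditions
say that the isometry preserves the quadratic form.
-/

namespace Stmt6

/-- The bilinear form of `T_{2m} = ⟨-2m⟩ ⊕ U ⊕ U` on `ℤ⁵`. -/
def B (m : ℤ) (x y : Fin 5 → ℤ) : ℤ :=
  -2 * m * (x 0 * y 0) + x 1 * y 2 + x 2 * y 1 + x 3 * y 4 + x 4 * y 3

open QuadraticMap
open scoped MatrixGroups

section QuadraticForm

variable {R M : Type*} [CommRing R] [AddCommGroup M] [Module R M] {Q : QuadraticForm R M}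

/-- Two vectors of a quadratic module are in the same orbit of its orthogonal group. -/
def SameOrbit (Q : QuadraticForm R M) (v w : M) : Prop :=
  ∃ φ : Q.IsometryEquiv Q, φ v = w

lemma SameOrbit.refl (v : M) : SameOrbit Q v v :=
  ⟨.refl Q, rfl⟩

lemma SameOrbit.trans {u v w : M} (huv : SameOrbit Q u v) (hvw : SameOrbit Q v w) :
    SameOrbit Q u w := by
  obtain ⟨φ, rfl⟩ := huv
  obtain ⟨ψ, rfl⟩ := hvw
  exact ⟨φ.trans ψ, rfl⟩

lemma polar_map_isometryEquiv (φ : Q.IsometryEquiv Q) (x y : M) :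
    polar Q (φ x) (φ y) = polar Q x y := by
  simp only [polar, ← map_add, IsometryEquiv.map_app]

lemma SameOrbit.dvd_polar {v w : M} (h : SameOrbit Q v w) {r : R} (hv : ∀ x, r ∣ polar Q v x)
    (x : M) : r ∣ polar Q w x := by
  obtain ⟨φ, rfl⟩ := h
  rw [← φ.apply_symm_apply x, polar_map_isometryEquiv]
  exact hv _

/-- The Eichler transvection `E(e, a)`, which is an isometry when `e` is isotropic and `a` is
orthogonal to `e`, as a linear map defined for all `e` and `a`. -/
def eichlerMap (Q : QuadraticForm R M) (e a : M) : M →ₗ[R] M :=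
  LinearMap.id + (Q.polarBilin e).smulRight a -
    (Q.polarBilin a + Q a • Q.polarBilin e).smulRight e

lemma eichlerMap_apply (e a v : M) :
    eichlerMap Q e a v = v + polar Q e v • a - (polar Q a v + Q a * polar Q e v) • e := rfl

lemma map_eichlerMap {e a : M} (he : Q e = 0) (hea : polar Q e a = 0) (v : M) :
    Q (eichlerMap Q e a v) = Q v := by
  have hae : polar Q a e = 0 := polar_comm Q a e ▸ hea
  rw [eichlerMap_apply, sub_eq_add_neg, ← neg_smul]
  simp only [QuadraticMap.map_add Q, QuadraticMap.map_smul, polar_add_left, polar_smul_left,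
    polar_smul_right, he, hae, polar_comm Q v, smul_eq_mul]
  ring

lemma eichlerMap_comp_neg {e a : M} (he : Q e = 0) (hea : polar Q e a = 0) :
    eichlerMap Q e a ∘ₗ eichlerMap Q e (-a) = LinearMap.id := by
  have hae : polar Q a e = 0 := polar_comm Q a e ▸ hea
  ext v
  simp only [LinearMap.comp_apply, LinearMap.id_apply, eichlerMap_apply, polar_add_right,
    polar_sub_right, polar_smul_right, polar_neg_right, polar_neg_left, polar_self, he, hea, hae,
    QuadraticMap.map_neg, smul_eq_mul, nsmul_eq_mul]
  module

/-- The Eichler transvection `E(e, a)` as an isometry. -/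
def eichlerIsometry {e a : M} (he : Q e = 0) (hea : polar Q e a = 0) : Q.IsometryEquiv Q where
  toLinearEquiv := LinearEquiv.ofLinearMap (eichlerMap Q e a) (eichlerMap Q e (-a))
    (eichlerMap_comp_neg he hea)
    (by simpa using eichlerMap_comp_neg (a := -a) he (by simpa using hea))
  map_app' := map_eichlerMap he hea

lemma sameOrbit_eichlerMap {e a : M} (he : Q e = 0) (hea : polar Q e a = 0) (v : M) :
    SameOrbit Q v (eichlerMap Q e a v) :=
  ⟨eichlerIsometry he hea, rfl⟩

end QuadraticForm

/-- The quadratic form `x ↦ B(x, x) / 2` of the even lattice `T_{2m}`; its polar form is `B m`. -/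
def latticeForm (m : ℤ) : QuadraticForm ℤ (Fin 5 → ℤ) :=
  -m • proj 0 0 + proj 1 2 + proj 3 4

lemma latticeForm_apply (m : ℤ) (x : Fin 5 → ℤ) :
    latticeForm m x = -m * (x 0 * x 0) + x 1 * x 2 + x 3 * x 4 := rfl

lemma polar_latticeForm (m : ℤ) (x y : Fin 5 → ℤ) : polar (latticeForm m) x y = B m x y := by
  simp only [polar, latticeForm_apply, B, Pi.add_apply]
  ring

lemma eichlerMap_latticeForm_apply (m : ℤ) (e a v : Fin 5 → ℤ) (i : Fin 5) :
    eichlerMap (latticeForm m) e a v i =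
      v i + B m e v * a i - (B m a v + latticeForm m a * B m e v) * e i := by
  simp only [eichlerMap_apply, polar_latticeForm, Pi.sub_apply, Pi.add_apply, Pi.smul_apply,
    smul_eq_mul]

lemma B_map_isometryEquiv {m : ℤ} (φ : (latticeForm m).IsometryEquiv (latticeForm m))
    (x y : Fin 5 → ℤ) : B m (φ x) (φ y) = B m x y := by
  simpa only [polar_latticeForm] using polar_map_isometryEquiv φ x y

lemma specialLinear_mul_sub_mul_eq_one (g : SL(2, ℤ)) : g 0 0 * g 1 1 - g 0 1 * g 1 0 = 1 := by
  rw [← Matrix.det_fin_two, g.det_coe]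

/-- `g ∈ SL₂(ℤ)` acting on `U ⊕ U = ℤ² ⊕ (ℤ²)*`, where `ℤ²` has coordinates `x₁, x₃` and the dual
has coordinates `x₂, x₄`, by `g` on `ℤ²` and contragrediently on the dual. -/
def specialLinearMap (g : SL(2, ℤ)) : (Fin 5 → ℤ) →ₗ[ℤ] (Fin 5 → ℤ) where
  toFun x := ![x 0, g 0 0 * x 1 + g 0 1 * x 3, g 1 1 * x 2 - g 1 0 * x 4,
    g 1 0 * x 1 + g 1 1 * x 3, g 0 0 * x 4 - g 0 1 * x 2]
  map_add' x y := by ext i; fin_cases i <;> simp <;> ring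
  map_smul' r x := by ext i; fin_cases i <;> simp <;> ring

lemma specialLinearMap_apply (g : SL(2, ℤ)) (x : Fin 5 → ℤ) :
    specialLinearMap g x =
      ![x 0, g 0 0 * x 1 + g 0 1 * x 3, g 1 1 * x 2 - g 1 0 * x 4,
        g 1 0 * x 1 + g 1 1 * x 3, g 0 0 * x 4 - g 0 1 * x 2] := rfl

lemma specialLinearMap_inv_apply (g : SL(2, ℤ)) (x : Fin 5 → ℤ) :
    specialLinearMap g⁻¹ x =
      ![x 0, g 1 1 * x 1 - g 0 1 * x 3, g 0 0 * x 2 + g 1 0 * x 4,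
        g 0 0 * x 3 - g 1 0 * x 1, g 1 1 * x 4 + g 0 1 * x 2] := by
  rw [specialLinearMap_apply]
  ext i
  fin_cases i <;>
    simp [Matrix.SpecialLinearGroup.coe_inv, Matrix.adjugate_fin_two, neg_add_eq_sub,
      sub_eq_add_neg]

lemma specialLinearMap_comp_inv (g : SL(2, ℤ)) :
    specialLinearMap g ∘ₗ specialLinearMap g⁻¹ = LinearMap.id := by
  have hdet := specialLinear_mul_sub_mul_eq_one g
  refine LinearMap.ext fun x ↦ ?_
  rw [LinearMap.comp_apply, specialLinearMap_inv_apply, specialLinearMap_apply, LinearMap.id_apply]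
  ext i
  fin_cases i <;>
    simp only [Fin.zero_eta, Fin.mk_one, Fin.reduceFinMk, Matrix.cons_val]
  · linear_combination x 1 * hdet
  · linear_combination x 2 * hdet
  · linear_combination x 3 * hdet
  · linear_combination x 4 * hdet

/-- The action of `SL₂(ℤ)` on `U ⊕ U`, extended by the identity to an action on `T_{2m}`. -/
def specialLinearIsometry (m : ℤ) (g : SL(2, ℤ)) :
    (latticeForm m).IsometryEquiv (latticeForm m) where
  toLinearEquiv := LinearEquiv.ofLinearMap (specialLinearMap g) (specialLinearMap g⁻¹)
    (specialLinearMap_comp_inv g) (by simpa using specialLinearMap_comp_inv g⁻¹)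
  map_app' x := by
    have hdet := specialLinear_mul_sub_mul_eq_one g
    change latticeForm m (specialLinearMap g x) = latticeForm m x
    simp only [latticeForm_apply, specialLinearMap_apply, Matrix.cons_val]
    linear_combination (x 1 * x 2 + x 3 * x 4) * hdet

lemma exists_sameOrbit_apply_one_eq (m : ℤ) {v : Fin 5 → ℤ} {d s t : ℤ} (hst : IsCoprime s t)
    (hs : v 1 = d * s) (ht : v 3 = d * t) :
    ∃ w, SameOrbit (latticeForm m) v w ∧ w 0 = v 0 ∧ w 1 = d := by
  obtain ⟨g, rfl, rfl⟩ := hst.exists_SL2_col 0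
  refine ⟨_, ⟨specialLinearIsometry m g⁻¹, rfl⟩, rfl, ?_⟩
  have hdet := specialLinear_mul_sub_mul_eq_one g
  change specialLinearMap g⁻¹ v 1 = d
  simp only [specialLinearMap_inv_apply, Matrix.cons_val, hs, ht]
  linear_combination d * hdet

lemma sameOrbit_abs (m a b c d e : ℤ) :
    SameOrbit (latticeForm m) ![a, b, c, d, e] ![|a|, b, c, d, e] := by
  let reflection : (latticeForm m).IsometryEquiv (latticeForm m) :=
    { LinearEquiv.piCongrRight
        (Function.update (fun _ ↦ LinearEquiv.refl ℤ ℤ) 0 (LinearEquiv.neg ℤ)) with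
      map_app' := fun x ↦ by simp [latticeForm_apply] }
  obtain habs | habs := abs_choice a
  · rw [habs]
    exact .refl _
  · refine ⟨reflection, ?_⟩
    rw [habs]
    ext i
    fin_cases i <;> rfl

lemma exists_sameOrbit_of_forall_dvd {m : ℤ} {v : Fin 5 → ℤ} (hv : ∀ x, v 1 ∣ B m v x) (k : ℤ) :
    ∃ h, SameOrbit (latticeForm m) v ![v 0 + k * v 1, v 1, v 1 * h, 0, 0] := by
  obtain ⟨x₀, h₀⟩ : v 1 ∣ -2 * m * v 0 := by simpa [B] using hv (Pi.single 0 1)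
  obtain ⟨x₂, h₂⟩ : v 1 ∣ v 2 := by simpa [B] using hv (Pi.single 1 1)
  obtain ⟨x₃, h₃⟩ : v 1 ∣ v 3 := by simpa [B] using hv (Pi.single 4 1)
  obtain ⟨x₄, h₄⟩ : v 1 ∣ v 4 := by simpa [B] using hv (Pi.single 3 1)
  let e : Fin 5 → ℤ := ![0, 0, 1, 0, 0]
  let a : Fin 5 → ℤ := ![k, 0, 0, -x₃, -x₄]
  have he : latticeForm m e = 0 := by simp [latticeForm_apply, e]
  have hea : polar (latticeForm m) e a = 0 := by simp [polar_latticeForm, B, e, a]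
  refine ⟨x₂ - k * x₀ + x₃ * x₄ + m * k ^ 2, ?_⟩
  convert sameOrbit_eichlerMap he hea v using 1
  ext i
  fin_cases i <;>
    simp only [eichlerMap_latticeForm_apply, latticeForm_apply, B, e, a, h₂, h₃, h₄,
      Fin.zero_eta, Fin.mk_one, Fin.reduceFinMk, Matrix.cons_val]
  · ring
  · ring
  · linear_combination k * h₀
  · ring
  · ring

lemma exists_sameOrbit_add_mul_gcd (m : ℤ) {n b : ℤ} (c : ℤ) (hnb : IsCoprime n b) (k : ℤ) :
    ∃ h, SameOrbit (latticeForm m) ![n, b, b * c, 0, 0]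
      ![n + k * Int.gcd b (2 * m), Int.gcd b (2 * m), Int.gcd b (2 * m) * h, 0, 0] := by
  obtain ⟨s, t, hs, ht, hst⟩ := extract_gcd b (2 * m)
  rw [← Int.coe_gcd] at hs ht
  rw [gcd_isUnit_iff] at hst
  generalize (Int.gcd b (2 * m) : ℤ) = d at hs ht ⊢
  set q : Fin 5 → ℤ := ![n, b, b * c, 0, 0]
  have hq (x : Fin 5 → ℤ) : d ∣ polar (latticeForm m) q x := by
    refine ⟨-t * n * x 0 + s * x 2 + s * c * x 1, ?_⟩
    simp only [polar_latticeForm, B, q, Matrix.cons_val]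
    linear_combination (x 2 + c * x 1) * hs - n * x 0 * ht
  have hsn : IsCoprime s n := hnb.symm.of_isCoprime_of_dvd_left ⟨d, by rw [hs, mul_comm]⟩
  let e : Fin 5 → ℤ := ![0, 0, 0, 1, 0]
  let a : Fin 5 → ℤ := ![1, 0, 0, 0, 0]
  have he : latticeForm m e = 0 := by simp [latticeForm_apply, e]
  have hea : polar (latticeForm m) e a = 0 := by simp [polar_latticeForm, B, e, a]
  -- `E(e, a) q = (n, b, bc, 2mn, 0)`, whose entries `b` and `2mn` have greatest common divisor `d`.
  have hqv := sameOrbit_eichlerMap he hea q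
  obtain ⟨w, hvw, hw₀, rfl⟩ :=
    exists_sameOrbit_apply_one_eq m (v := eichlerMap (latticeForm m) e a q) (hst.mul_right hsn)
      (by simpa [eichlerMap_latticeForm_apply, B, q, e, a] using hs)
      (by
        simp only [eichlerMap_latticeForm_apply, B, q, e, a, Matrix.cons_val]
        linear_combination n * ht)
  have hqw := hqv.trans hvw
  obtain ⟨h, hwh⟩ := exists_sameOrbit_of_forall_dvd
    (fun x ↦ polar_latticeForm m w x ▸ hqw.dvd_polar hq x) k
  have hw₀ : w 0 = n := by simp [hw₀, eichlerMap_latticeForm_apply, B, q, e, a]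
  exact ⟨h, hqw.trans (hw₀ ▸ hwh)⟩

theorem exists_sameOrbit_isCoprime_two_mul_le_gcd {m n b : ℤ} (hm : m ≠ 0) (c : ℤ)
    (hnb : IsCoprime n b) :
    ∃ l h : ℤ, 0 ≤ l ∧ 2 * l ≤ Int.gcd b (2 * m) ∧ IsCoprime l (Int.gcd b (2 * m)) ∧
      SameOrbit (latticeForm m) ![n, b, b * c, 0, 0]
        ![l, Int.gcd b (2 * m), Int.gcd b (2 * m) * h, 0, 0] := by
  have hd : 0 < Int.gcd b (2 * m) := Int.gcd_pos_of_ne_zero_right _ (by simpa using hm)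
  have hnd : IsCoprime n (Int.gcd b (2 * m)) := hnb.of_isCoprime_of_dvd_right (Int.gcd_dvd_left ..)
  have hreduce := exists_sameOrbit_add_mul_gcd m c hnb
  generalize Int.gcd b (2 * m) = d at hd hnd hreduce
  have hmod : n + -n.bdiv d * d = n.bmod d := by rw [Int.bmod_eq_self_sub_bdiv_mul]; ring
  obtain ⟨h, horbit⟩ := hreduce (-n.bdiv d)
  refine ⟨|n.bmod d|, h, abs_nonneg _, ?_, ?_, ?_⟩
  · have hlower := Int.le_bmod (x := n) hd
    have hupper := Int.bmod_le (x := n) hd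
    have habs : |n.bmod d| ≤ d / 2 := abs_le.mpr ⟨hlower, by omega⟩
    omega
  · rw [IsCoprime.abs_left_iff, ← hmod]
    exact hnd.add_mul_right_left _
  · exact (hmod ▸ horbit).trans (sameOrbit_abs ..)

lemma dvd_two_mul_prime_iff {p d : ℕ} (hp : p.Prime) :
    d ∣ 2 * p ↔ d = 1 ∨ d = 2 ∨ d = p ∨ d = 2 * p := by
  constructor
  · rw [Nat.dvd_mul]
    rintro ⟨x, y, hx, hy, rfl⟩
    rw [Nat.dvd_prime Nat.prime_two] at hx
    rw [Nat.dvd_prime hp] at hy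
    rcases hx with rfl | rfl <;> rcases hy with rfl | rfl <;> simp
  · rintro (rfl | rfl | rfl | rfl) <;> simp

theorem stmt_6_general (p : ℕ) (hp : p.Prime) (n b c : ℤ) (hgcd : Int.gcd n b = 1) :
    ∃ φ : (Fin 5 → ℤ) ≃ₗ[ℤ] (Fin 5 → ℤ),
      (∀ x y, B p (φ x) (φ y) = B p x y) ∧
      ((∃ r : ℤ, 2 * b ^ 2 * c - 2 * p * n ^ 2 = 2 * r ∧
          φ ![n, b, b * c, 0, 0] = ![0, 1, r, 0, 0]) ∨
       (∃ s : ℤ, 2 * b ^ 2 * c - 2 * p * n ^ 2 = 8 * s - 2 * p ∧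
          φ ![n, b, b * c, 0, 0] = ![1, 2, 2 * s, 0, 0]) ∨
       (∃ l t : ℤ, 0 < l ∧ l ≤ (p : ℤ) / 2 ∧
          2 * b ^ 2 * c - 2 * p * n ^ 2 = 2 * p ^ 2 * t - 2 * p * l ^ 2 ∧
          φ ![n, b, b * c, 0, 0] = ![l, (p : ℤ), p * t, 0, 0]) ∨
       (∃ j u : ℤ, 0 < j ∧ j < (p : ℤ) ∧ Odd j ∧
          2 * b ^ 2 * c - 2 * p * n ^ 2 = 8 * p ^ 2 * u - 2 * p * j ^ 2 ∧
          φ ![n, b, b * c, 0, 0] = ![j, 2 * (p : ℤ), 2 * p * u, 0, 0])) := by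
  have hp₂ := hp.two_le
  obtain ⟨l, h, hl₀, hl, hcop, φ, hφ⟩ := exists_sameOrbit_isCoprime_two_mul_le_gcd
    (m := p) (by exact_mod_cast hp.ne_zero) c (Int.isCoprime_iff_gcd_eq_one.mpr hgcd)
  have hdvd : Int.gcd b (2 * p) ∣ 2 * p := by exact_mod_cast Int.gcd_dvd_right b (2 * p)
  have hnorm := φ.map_app ![n, b, b * c, 0, 0]
  generalize Int.gcd b (2 * p) = d at *
  rw [hφ] at hnorm
  simp only [latticeForm_apply, Matrix.cons_val] at hnorm
  have hl_pos (hd : d ≠ 1) : 0 < l := by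
    refine hl₀.lt_of_ne' ?_
    rintro rfl
    exact hd (by simpa [Int.isUnit_iff] using isCoprime_zero_left.mp hcop)
  refine ⟨φ.toLinearEquiv, B_map_isometryEquiv φ, ?_⟩
  rcases (dvd_two_mul_prime_iff hp).mp hdvd with rfl | rfl | rfl | rfl
  · obtain rfl : l = 0 := by omega
    exact .inl ⟨h, by linear_combination -2 * hnorm, by simpa using hφ⟩
  · obtain rfl : l = 1 := by have := hl_pos (by simp); omega
    exact .inr <| .inl ⟨h, by linear_combination -2 * hnorm, hφ⟩
  · exact .inr <| .inr <| .inl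
      ⟨l, h, hl_pos (by omega), by omega, by linear_combination -2 * hnorm, hφ⟩
  · push_cast at hl hcop hnorm hφ
    have hlp : l ≠ p := by
      rintro rfl
      exact (Nat.prime_iff_prime_int.mp hp).not_isUnit (isCoprime_self.mp hcop.of_mul_right_right)
    exact .inr <| .inr <| .inr ⟨l, h, hl_pos (by omega), by omega,
      Int.isCoprime_two_right.mp hcop.of_mul_right_left, by linear_combination -2 * hnorm, hφ⟩

/-- Let `p` be a prime and `q = (n, b, b·c, 0, 0)` with `n ≥ 0`, `b > 0`,
`gcd(n,b) = 1`. Then some isometry of `T_{2p}` sends `q` to a vector of one of the four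
shapes `(0,1,r,0,0)`, `(1,2,2s,0,0)`, `(l,p,p·t,0,0)` (with `0 < l ≤ ⌊p/2⌋`), or
`(j,2p,2p·u,0,0)` (with `0 < j < p`, `j` odd), with the stated norm conditions. -/
theorem stmt_6 (p : ℕ) (hp : p.Prime) (n b c : ℤ) (hn : 0 ≤ n) (hb : 0 < b)
    (hgcd : Int.gcd n b = 1) :
    ∃ φ : (Fin 5 → ℤ) ≃ₗ[ℤ] (Fin 5 → ℤ),
      (∀ x y, B p (φ x) (φ y) = B p x y) ∧
      ((∃ r : ℤ, 2 * b ^ 2 * c - 2 * p * n ^ 2 = 2 * r ∧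
          φ ![n, b, b * c, 0, 0] = ![0, 1, r, 0, 0]) ∨
       (∃ s : ℤ, 2 * b ^ 2 * c - 2 * p * n ^ 2 = 8 * s - 2 * p ∧
          φ ![n, b, b * c, 0, 0] = ![1, 2, 2 * s, 0, 0]) ∨
       (∃ l t : ℤ, 0 < l ∧ l ≤ (p : ℤ) / 2 ∧
          2 * b ^ 2 * c - 2 * p * n ^ 2 = 2 * p ^ 2 * t - 2 * p * l ^ 2 ∧
          φ ![n, b, b * c, 0, 0] = ![l, (p : ℤ), p * t, 0, 0]) ∨
       (∃ j u : ℤ, 0 < j ∧ j < (p : ℤ) ∧ Odd j ∧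
          2 * b ^ 2 * c - 2 * p * n ^ 2 = 8 * p ^ 2 * u - 2 * p * j ^ 2 ∧
          φ ![n, b, b * c, 0, 0] = ![j, 2 * (p : ℤ), 2 * p * u, 0, 0])) :=
  stmt_6_general p hp n b c hgcd

end Stmt6
end

section
/- Let p be a prime number. For all integers t, s and f there exists an isometry of T_{2p} which sends the vector (t·s, t, f, 0, 0) to the vector (0, t, f − p·t·s², 0, 0). -/
namespace Stmt9

/-- The bilinear form of `T_{2m} = ⟨-2m⟩ ⊕ U ⊕ U` on `ℤ⁵`. -/
def B (m : ℤ) (x y : Fin 5 → ℤ) : ℤ :=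
  -2 * m * (x 0 * y 0) + x 1 * y 2 + x 2 * y 1 + x 3 * y 4 + x 4 * y 3

/-!
`T_{2m}` is an even lattice: its form is the polar form of `Q = -m x₀² + x₁x₂ + x₃x₄`, so it is
enough to preserve `Q`. For `e` isotropic and `a ⊥ e`, the Eichler transvection
`x ↦ x + ⟨e, x⟩ (a - Q(a) e) - ⟨a, x⟩ e` does so. For `e = (0, 0, 1, 0, 0)` and
`a = (-s, 0, 0, 0, 0)` it subtracts `s x₁` from the coordinate `x₀`, which clears that coordinate
of `(ts, t, f, 0, 0)`.
-/

section

open QuadraticMap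

section EichlerTransvection

variable {R M : Type*} [CommRing R] [AddCommGroup M] [Module R M]

/-- The Eichler transvection attached to vectors `e` and `a` of a quadratic module `(M, Q)`. It is
an isometry when `e` is isotropic and `a` is orthogonal to `e`. It is written with `Q a` rather than
half of `⟨a, a⟩`, so that `2` need not be invertible. -/
def eichlerTransvection (Q : QuadraticForm R M) (e a : M) : M →ₗ[R] M :=
  LinearMap.id + (Q.polarBilin e).smulRight (a - Q a • e) - (Q.polarBilin a).smulRight e

variable (Q : QuadraticForm R M)

theorem eichlerTransvection_apply (e a x : M) :
    eichlerTransvection Q e a x = x + polar Q e x • (a - Q a • e) - polar Q a x • e :=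
  rfl

@[simp]
theorem eichlerTransvection_zero (e : M) : eichlerTransvection Q e 0 = LinearMap.id := by
  ext x
  simp [eichlerTransvection_apply]

variable {Q} {e a b : M}

theorem eichlerTransvection_comp (he : Q e = 0) (ha : polar Q e a = 0) (hb : polar Q e b = 0) :
    eichlerTransvection Q e a ∘ₗ eichlerTransvection Q e b = eichlerTransvection Q e (a + b) := by
  have hee : polar Q e e = 0 := by simp [he]
  have hae : polar Q a e = 0 := by rw [polar_comm, ha]
  ext x
  simp only [LinearMap.comp_apply, eichlerTransvection_apply, polar_add_left, polar_add_right,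
    polar_sub_right, polar_smul_right, QuadraticMap.map_add Q a b, hb, hee, hae, smul_eq_mul]
  module

theorem map_eichlerTransvection (he : Q e = 0) (ha : polar Q e a = 0) (x : M) :
    Q (eichlerTransvection Q e a x) = Q x := by
  have hee : polar Q e e = 0 := by simp [he]
  have hae : polar Q a e = 0 := by rw [polar_comm, ha]
  have hQa : Q (a - Q a • e) = Q a := by
    rw [sub_eq_add_neg, ← neg_smul, QuadraticMap.map_add Q, QuadraticMap.map_smul,
      polar_smul_right, he, hae, smul_zero, smul_zero, add_zero, add_zero]
  rw [eichlerTransvection_apply, sub_eq_add_neg, ← neg_smul]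
  simp only [QuadraticMap.map_add Q, QuadraticMap.map_smul, polar_add_left, polar_sub_left,
    polar_smul_left, polar_smul_right, polar_comm Q x, he, hee, hae, hQa, smul_eq_mul]
  ring

/-- The Eichler transvection as an isometry of `Q`, with inverse the transvection attached to `e`
and `-a`. -/
def eichlerIsometryEquiv (he : Q e = 0) (ha : polar Q e a = 0) : Q.IsometryEquiv Q where
  toLinearEquiv := LinearEquiv.ofLinearMap
    (eichlerTransvection Q e a) (eichlerTransvection Q e (-a))
    (by rw [eichlerTransvection_comp he ha (by simp [ha]), add_neg_cancel,
      eichlerTransvection_zero])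
    (by rw [eichlerTransvection_comp he (by simp [ha]) ha, neg_add_cancel,
      eichlerTransvection_zero])
  map_app' := map_eichlerTransvection he ha

theorem eichlerIsometryEquiv_apply (he : Q e = 0) (ha : polar Q e a = 0) (x : M) :
    eichlerIsometryEquiv he ha x = eichlerTransvection Q e a x :=
  rfl

end EichlerTransvection

theorem polar_isometryEquiv_apply {R M₁ M₂ N : Type*} [CommSemiring R] [AddCommGroup M₁]
    [AddCommGroup M₂] [AddCommGroup N] [Module R M₁] [Module R M₂] [Module R N]
    {Q₁ : QuadraticMap R M₁ N} {Q₂ : QuadraticMap R M₂ N} (φ : Q₁.IsometryEquiv Q₂) (x y : M₁) :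
    polar Q₂ (φ x) (φ y) = polar Q₁ x y := by
  simp only [polar, ← φ.map_app, map_add]

/-- The quadratic form `-m x₀² + x₁x₂ + x₃x₄` of the even lattice `T_{2m}`, normalised so that
`Q x` is half of `B m x x`. -/
def quadForm (m : ℤ) : QuadraticForm ℤ (Fin 5 → ℤ) :=
  -m • proj 0 0 + proj 1 2 + proj 3 4

theorem quadForm_apply (m : ℤ) (x : Fin 5 → ℤ) :
    quadForm m x = -m * (x 0 * x 0) + x 1 * x 2 + x 3 * x 4 :=
  rfl

theorem polar_quadForm (m : ℤ) (x y : Fin 5 → ℤ) : polar (quadForm m) x y = B m x y := by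
  simp only [polar, quadForm_apply, Pi.add_apply, B]
  ring

theorem eichlerTransvection_quadForm_apply (m s : ℤ) (x : Fin 5 → ℤ) :
    eichlerTransvection (quadForm m) (Pi.single 2 1) (Pi.single 0 (-s)) x =
      ![x 0 - s * x 1, x 1, x 2 - 2 * m * s * x 0 + m * s ^ 2 * x 1, x 3, x 4] := by
  ext i
  fin_cases i <;>
    simp [eichlerTransvection_apply, polar_quadForm, quadForm_apply, B] <;> ring

theorem stmt_9_general (m t s f : ℤ) :
    ∃ φ : (Fin 5 → ℤ) ≃ₗ[ℤ] (Fin 5 → ℤ),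
      (∀ x y, B m (φ x) (φ y) = B m x y) ∧
      φ ![t * s, t, f, 0, 0] = ![0, t, f - m * t * s ^ 2, 0, 0] := by
  have isotropic : quadForm m (Pi.single 2 1) = 0 := by simp [quadForm_apply]
  have orthogonal : polar (quadForm m) (Pi.single 2 1) (Pi.single 0 (-s)) = 0 := by
    simp [polar_quadForm, B]
  let φ := eichlerIsometryEquiv isotropic orthogonal
  refine ⟨φ.toLinearEquiv, fun x y ↦ ?_, ?_⟩
  · simp only [IsometryEquiv.coe_toLinearEquiv, ← polar_quadForm, polar_isometryEquiv_apply]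
  · calc φ ![t * s, t, f, 0, 0]
        = ![t * s - s * t, t, f - 2 * m * s * (t * s) + m * s ^ 2 * t, 0, 0] :=
          (eichlerIsometryEquiv_apply isotropic orthogonal _).trans
            (eichlerTransvection_quadForm_apply m s ![t * s, t, f, 0, 0])
      _ = ![0, t, f - m * t * s ^ 2, 0, 0] := by ring_nf

end

/-- For a prime `p` and integers `t`, `s`, `f`, some isometry of `T_{2p}` sends
`(t·s, t, f, 0, 0)` to `(0, t, f - p·t·s², 0, 0)`. -/
theorem stmt_9 (p : ℕ) (hp : p.Prime) (t s f : ℤ) :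
    ∃ φ : (Fin 5 → ℤ) ≃ₗ[ℤ] (Fin 5 → ℤ),
      (∀ x y, B p (φ x) (φ y) = B p x y) ∧
      φ ![t * s, t, f, 0, 0] = ![0, t, f - p * t * s ^ 2, 0, 0] :=
  stmt_9_general p t s f

end Stmt9
end

section
/- Every 𝔽₂-linear subspace C of 𝔽₂¹⁵ with the property that every nonzero vector of C has Hamming weight exactly 8 satisfies dim_{𝔽₂} C ≤ 4. -/
/-!
Plotkin's averaging argument. Each coordinate of an additive code `C ⊆ Gⁿ` is a homomorphism
`C → G`, so it vanishes on at least the fraction `1 / q` of `C`, where `q = |G|`; the average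
weight is therefore at most `(1 - 1 / q) n`. If all `|C| - 1` nonzero codewords have weight at
least `d`, this gives `q d (|C| - 1) ≤ (q - 1) n |C|`, and when `(q - 1) n < q d` the cardinality
of `C` is at most `q d`.
-/

open Finset

section AddGroup

variable {ι G H : Type*} [AddGroup G] [AddGroup H]

theorem natCard_le_natCard_mul_natCard_ker [Finite G] (f : H →+ G) :
    Nat.card H ≤ Nat.card G * Nat.card f.ker := by
  rw [← f.ker.index_mul_card, AddSubgroup.index_ker]
  exact Nat.mul_le_mul_right _ (AddSubgroup.card_le_card_addGroup f.range)

theorem natCard_mul_card_filter_ne_zero_le [Finite G] [DecidableEq G] [Fintype H] (f : H →+ G) :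
    Nat.card G * #{x | f x ≠ 0} ≤ (Nat.card G - 1) * Nat.card H := by
  have card_ker : Nat.card f.ker = #{x | f x = 0} :=
    Nat.subtype_card _ fun x ↦ by simp [AddMonoidHom.mem_ker]
  have card_split : #{x | f x = 0} + #{x | f x ≠ 0} = Nat.card H := by
    rw [card_filter_add_card_filter_not, card_univ, Nat.card_eq_fintype_card]
  have card_le := natCard_le_natCard_mul_natCard_ker f
  rw [card_ker] at card_le
  rw [Nat.sub_one_mul]
  refine Nat.le_sub_of_add_le ?_
  calc Nat.card G * #{x | f x ≠ 0} + Nat.card H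
      ≤ Nat.card G * #{x | f x ≠ 0} + Nat.card G * #{x | f x = 0} := by gcongr
    _ = Nat.card G * Nat.card H := by rw [← mul_add, add_comm, card_split]

theorem sum_hammingNorm_eq_sum_card_filter_ne_zero {α : Type*} {β : ι → Type*} [Fintype ι]
    [∀ i, Zero (β i)] [∀ i, DecidableEq (β i)] (s : Finset α) (f : α → ∀ i, β i) :
    ∑ a ∈ s, hammingNorm (f a) = ∑ i, #{a ∈ s | f a i ≠ 0} :=
  sum_card_bipartiteAbove_eq_sum_card_bipartiteBelow fun a i ↦ f a i ≠ 0

variable [Fintype ι] [DecidableEq G] (C : AddSubgroup (ι → G))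

theorem natCard_mul_sum_hammingNorm_le [Finite G] [Fintype C] :
    Nat.card G * ∑ x : C, hammingNorm (x : ι → G) ≤
      (Nat.card G - 1) * (Fintype.card ι * Nat.card C) := by
  calc Nat.card G * ∑ x : C, hammingNorm (x : ι → G)
      = ∑ i, Nat.card G * #{x : C | (x : ι → G) i ≠ 0} := by
        rw [sum_hammingNorm_eq_sum_card_filter_ne_zero, mul_sum]
    _ ≤ ∑ _i : ι, (Nat.card G - 1) * Nat.card C :=
        sum_le_sum fun i _ ↦
          natCard_mul_card_filter_ne_zero_le ((Pi.evalAddMonoidHom (fun _ ↦ G) i).comp C.subtype)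
    _ = (Nat.card G - 1) * (Fintype.card ι * Nat.card C) := by
        rw [sum_const, card_univ, smul_eq_mul, mul_left_comm]

variable {C} {d : ℕ}

theorem mul_natCard_sub_one_le_sum_hammingNorm [Fintype C]
    (hd : ∀ x ∈ C, x ≠ 0 → d ≤ hammingNorm x) :
    d * (Nat.card C - 1) ≤ ∑ x : C, hammingNorm (x : ι → G) := by
  classical
  calc d * (Nat.card C - 1)
      = ∑ _x ∈ univ.erase (0 : C), d := by
        rw [sum_const, card_erase_of_mem (mem_univ _), card_univ, Nat.card_eq_fintype_card,
          smul_eq_mul, mul_comm]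
    _ ≤ ∑ x ∈ univ.erase (0 : C), hammingNorm (x : ι → G) :=
        sum_le_sum fun x hx ↦ hd x x.2 (by simpa using hx)
    _ ≤ ∑ x : C, hammingNorm (x : ι → G) := sum_le_sum_of_subset (erase_subset _ _)

theorem plotkin_bound [Finite G] (hd : ∀ x ∈ C, x ≠ 0 → d ≤ hammingNorm x) :
    Nat.card G * (d * (Nat.card C - 1)) ≤
      (Nat.card G - 1) * (Fintype.card ι * Nat.card C) := by
  have := Fintype.ofFinite C
  exact (Nat.mul_le_mul_left _ (mul_natCard_sub_one_le_sum_hammingNorm hd)).trans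
    (natCard_mul_sum_hammingNorm_le C)

theorem natCard_le_of_forall_le_hammingNorm [Finite G]
    (hn : (Nat.card G - 1) * Fintype.card ι < Nat.card G * d)
    (hd : ∀ x ∈ C, x ≠ 0 → d ≤ hammingNorm x) :
    Nat.card C ≤ Nat.card G * d := by
  have plotkin := plotkin_bound hd
  rw [← mul_assoc, ← mul_assoc, Nat.mul_sub_one, Nat.sub_le_iff_le_add] at plotkin
  have succ_mul_le := Nat.mul_le_mul_right (Nat.card C) (Nat.succ_le_of_lt hn)
  rw [Nat.succ_mul] at succ_mul_le
  lia

end AddGroup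

/-- For `(q - 1) n = q ^ (r + 1) - 1` these are the parameters of the `q`-ary simplex code, which
attains the bound. -/
theorem stmt_10_general {ι K : Type*} [Fintype ι] [Field K] [Finite K] [DecidableEq K] {r : ℕ}
    (hn : (Nat.card K - 1) * Fintype.card ι < Nat.card K ^ (r + 1)) (C : Submodule K (ι → K))
    (h : ∀ x ∈ C, x ≠ 0 → Nat.card K ^ r ≤ hammingNorm x) :
    Module.finrank K C ≤ r + 1 := by
  have card_C : Nat.card C = Nat.card K ^ Module.finrank K C := Module.natCard_eq_pow_finrank
  rw [pow_succ'] at hn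
  have card_le : Nat.card C ≤ Nat.card K * Nat.card K ^ r :=
    natCard_le_of_forall_le_hammingNorm (C := C.toAddSubgroup) hn h
  rw [card_C, ← pow_succ'] at card_le
  exact (Nat.pow_le_pow_iff_right Finite.one_lt_card).mp card_le

/-- Every `𝔽₂`-linear subspace of `𝔽₂¹⁵` all of whose nonzero vectors have Hamming
weight exactly `8` has dimension at most `4`. -/
theorem stmt_10 (C : Submodule (ZMod 2) (Fin 15 → ZMod 2))
    (h : ∀ x ∈ C, x ≠ 0 → hammingNorm x = 8) :
    Module.finrank (ZMod 2) C ≤ 4 :=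
  stmt_10_general (r := 3) (by simp) C fun x hx hx0 ↦ by simp [h x hx hx0]
end

section
/- The only elements x of the lattice M with B(x,x) = −2 are the vectors M_p and −M_p for p ∈ P; i.e., if x ∈ M satisfies B(x,x) = −2 then x = M_p or x = −M_p for some p ∈ P. -/
namespace Stmt13

/-- The 15 nonzero points of `(𝔽₂)⁴`. -/
abbrev P : Type := {p : Fin 4 → ZMod 2 // p ≠ 0}

/-- The ambient `ℚ`-vector space `ℚ^P`. -/
abbrev V : Type := P → ℚ

/-- The standard basis vector `M_p`. -/
noncomputable def Mvec (p : P) : V := Pi.single p 1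

/-- The bilinear form with `B (M_p) (M_q) = -2 δ_{pq}`. -/
noncomputable def B (x y : V) : ℚ := -2 * ∑ p : P, x p * y p

/-- The vector `½ ∑_{p ∈ P, α·p = 1} M_p`, for `α ∈ (𝔽₂)⁴ \ {0}`: half the sum of the
basis vectors indexed by an affine hyperplane of `(𝔽₂)⁴` not containing `0`. -/
noncomputable def halfSum (α : Fin 4 → ZMod 2) : V :=
  (1/2 : ℚ) • ∑ p ∈ Finset.univ.filter (fun p : P => ∑ i, α i * p.val i = 1), Mvec p

/-- The Nikulin-type lattice `M_{(ℤ/2ℤ)⁴}`. -/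
noncomputable def MLattice : Submodule ℤ V :=
  Submodule.span ℤ
    (Set.range Mvec ∪ {x | ∃ α : Fin 4 → ZMod 2, α ≠ 0 ∧ x = halfSum α})

/-!
Let `x ∈ M` have `B x x = -2`, that is, coordinates whose squares sum to `1`. Then `2x` is an
integer vector whose squares sum to `4` and whose reduction modulo two is a word of the binary
simplex code of dimension four. An even square is `0` and an odd square is `1` modulo `4`, so the
number of odd coordinates of `2x`, the weight of that word, is at most `4` and divisible by `4`.
All nonzero words have weight `8`, so `2x` has no odd coordinate and `x` is an integer vector.
-/

open Matrix

section IntegerVectors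

variable {ι : Type*} [Fintype ι]

theorem exists_eq_single_or_eq_neg_single_of_sum_sq_eq_one [DecidableEq ι] {z : ι → ℤ}
    (hz : ∑ p, z p ^ 2 = 1) : ∃ q, z = Pi.single q 1 ∨ z = -Pi.single q 1 := by
  obtain ⟨q, hq⟩ : ∃ q, z q ≠ 0 := by
    by_contra! hzero
    simp [hzero] at hz
  have hrest_nonneg : ∀ p ∈ Finset.univ.erase q, 0 ≤ z p ^ 2 := fun p _ => sq_nonneg _
  have hq_pos : 0 < z q ^ 2 := by positivity
  rw [← Finset.add_sum_erase _ _ (Finset.mem_univ q)] at hz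
  have hrest : ∑ p ∈ Finset.univ.erase q, z p ^ 2 = 0 := by
    have := Finset.sum_nonneg hrest_nonneg
    lia
  have hzero : ∀ p, p ≠ q → z p = 0 := fun p hp =>
    sq_eq_zero_iff.1 ((Finset.sum_eq_zero_iff_of_nonneg hrest_nonneg).1 hrest p (by simp [hp]))
  have hsingle : z = Pi.single q (z q) := by
    ext p
    by_cases hp : p = q
    · subst hp
      simp
    · simp [hp, hzero p hp]
  have hunit : z q = 1 ∨ z q = -1 := sq_eq_one_iff.1 (by lia)
  exact ⟨q, hunit.imp (fun h => by rw [hsingle, h]) fun h => by rw [hsingle, h, Pi.single_neg]⟩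

theorem hammingNorm_intCast_le_sum_sq (y : ι → ℤ) :
    (hammingNorm fun p => (y p : ZMod 2)) ≤ ∑ p, y p ^ 2 := by
  rw [hammingNorm, Finset.natCast_card_filter]
  refine Finset.sum_le_sum fun p _ => ?_
  split_ifs with hp
  · have : y p ≠ 0 := fun h => hp (by simp [h])
    have : 0 < y p ^ 2 := by positivity
    lia
  · positivity

theorem sum_sq_modEq_hammingNorm_intCast (y : ι → ℤ) :
    ∑ p, y p ^ 2 ≡ (hammingNorm fun p => (y p : ZMod 2)) [ZMOD 4] := by
  rw [hammingNorm, Finset.natCast_card_filter]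
  refine Int.ModEq.sum fun p _ => ?_
  rcases Int.even_or_odd (y p) with hp | hp
  · rw [if_neg (not_not.2 ((ZMod.intCast_eq_zero_iff_even).2 hp))]
    exact Int.modEq_zero_iff_dvd.2 (pow_dvd_pow_of_dvd hp.two_dvd 2)
  · rw [if_pos (by simpa [ZMod.intCast_eq_zero_iff_even] using hp)]
    exact Int.sq_mod_four_eq_one_of_odd hp

theorem intCast_eq_zero_of_sum_sq_eq_four {y : ι → ℤ} (hy : ∑ p, y p ^ 2 = 4)
    (hweight : (hammingNorm fun p => (y p : ZMod 2)) ≠ 4) : (fun p => (y p : ZMod 2)) = 0 := by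
  have hle := hammingNorm_intCast_le_sum_sq y
  have hmod := sum_sq_modEq_hammingNorm_intCast y
  rw [hy] at hle hmod
  rw [← hammingNorm_eq_zero]
  unfold Int.ModEq at hmod
  lia

end IntegerVectors

section CodeLattice

variable {ι : Type*} (R : Type*) [Field R]

/-- The Construction A lattice of a binary code `C`, scaled by one half: the vectors `y / 2` for
the integer vectors `y` whose reduction modulo two lies in `C`. It contains all integer vectors,
with the words of `C` as the classes modulo them. -/
def halfCodeLattice (C : Submodule (ZMod 2) (ι → ZMod 2)) : Submodule ℤ (ι → R) :=
  ((C.restrictScalars ℤ).comap ((Algebra.linearMap ℤ (ZMod 2)).compLeft ι)).map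
    ((2⁻¹ : R) • (Algebra.linearMap ℤ R).compLeft ι)

variable {R}

theorem mem_halfCodeLattice {C : Submodule (ZMod 2) (ι → ZMod 2)} {x : ι → R} :
    x ∈ halfCodeLattice R C ↔
      ∃ y : ι → ℤ, (fun p => (y p : ZMod 2)) ∈ C ∧ (fun p => 2⁻¹ * (y p : R)) = x :=
  Iff.rfl

variable [CharZero R]

theorem single_one_mem_halfCodeLattice [DecidableEq ι] (C : Submodule (ZMod 2) (ι → ZMod 2))
    (p : ι) : Pi.single p 1 ∈ halfCodeLattice R C := by
  refine mem_halfCodeLattice.2 ⟨Pi.single p 2, ?_, ?_⟩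
  · have hmod : (fun q => ((Pi.single p 2 : ι → ℤ) q : ZMod 2)) = 0 := by
      funext q
      by_cases hq : q = p
      · subst hq
        simpa using ZMod.natCast_self 2
      · simp [hq]
    exact hmod ▸ C.zero_mem
  · ext q
    by_cases hq : q = p
    · subst hq
      simp
    · simp [hq]

theorem stmt_13_general [Fintype ι] [DecidableEq ι] {C : Submodule (ZMod 2) (ι → ZMod 2)}
    (hC : ∀ c ∈ C, hammingNorm c ≠ 4) {x : ι → R} (hx : x ∈ halfCodeLattice R C)
    (hnorm : ∑ p, x p ^ 2 = 1) : ∃ p, x = Pi.single p 1 ∨ x = -Pi.single p 1 := by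
  obtain ⟨y, hyC, rfl⟩ := mem_halfCodeLattice.1 hx
  have hy_cast : ∑ p, (y p : R) ^ 2 = 4 := by
    simp only [mul_pow, ← Finset.mul_sum] at hnorm
    linear_combination 4 * hnorm
  have hy : ∑ p, y p ^ 2 = 4 := mod_cast hy_cast
  have hmod := intCast_eq_zero_of_sum_sq_eq_four hy (hC _ hyC)
  obtain ⟨z, rfl⟩ : ∃ z : ι → ℤ, y = fun p => 2 * z p := by
    choose z hz using fun p => (ZMod.intCast_zmod_eq_zero_iff_dvd (y p) 2).1 (congrFun hmod p)
    exact ⟨z, funext hz⟩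
  have hz : ∑ p, z p ^ 2 = 1 := by
    simp only [mul_pow, ← Finset.mul_sum] at hy
    lia
  obtain ⟨q, rfl | rfl⟩ := exists_eq_single_or_eq_neg_single_of_sum_sq_eq_one hz
  · exact ⟨q, .inl (by ext p; simp [Pi.single_apply])⟩
  · exact ⟨q, .inr (by ext p; simp [Pi.single_apply])⟩

end CodeLattice

theorem card_fiber_mul_card_of_surjective {G H : Type*} [AddGroup G] [Fintype G] [AddMonoid H]
    [Fintype H] [DecidableEq H] {f : G →+ H} (hf : Function.Surjective f) (h : H) :
    Finset.card {g | f g = h} * Fintype.card H = Fintype.card G := by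
  have hfiber : ∀ h', Finset.card {g | f g = h'} = Finset.card {g | f g = h} := fun h' =>
    AddMonoidHom.card_fiber_eq_of_mem_range f (hf h') (hf h)
  calc Finset.card {g | f g = h} * Fintype.card H
      = ∑ h' : H, Finset.card {g | f g = h'} := by simp [hfiber, mul_comm]
    _ = Fintype.card G := (Finset.card_eq_sum_card_fiberwise (by simp)).symm

section SimplexCode

variable {ι : Type*} [Fintype ι]

/-- The binary simplex code: its generator matrix has the nonzero vectors of `𝔽₂^ι` as columns. -/
def simplexCode (ι : Type*) [Fintype ι] :
    Submodule (ZMod 2) ({v : ι → ZMod 2 // v ≠ 0} → ZMod 2) :=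
  LinearMap.range (Matrix.of fun i (p : {v : ι → ZMod 2 // v ≠ 0}) => p.val i).vecMulLinear

theorem mem_simplexCode {c : {v : ι → ZMod 2 // v ≠ 0} → ZMod 2} :
    c ∈ simplexCode ι ↔ ∃ α : ι → ZMod 2, (fun p => α ⬝ᵥ p.val) = c :=
  Iff.rfl

variable [DecidableEq ι]

theorem hammingNorm_dotProduct_eq_card (α : ι → ZMod 2) :
    hammingNorm (fun p : {v : ι → ZMod 2 // v ≠ 0} => α ⬝ᵥ p.val) =
      Finset.card {v | α ⬝ᵥ v = 1} := by
  refine Finset.card_bij (fun p _ => p.val) ?_ (fun _ _ _ _ => Subtype.ext) ?_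
  · intro p hp
    have hp0 : α ⬝ᵥ p.val ≠ 0 := (Finset.mem_filter.1 hp).2
    exact Finset.mem_filter.2 ⟨Finset.mem_univ _, Fin.eq_one_of_ne_zero _ hp0⟩
  · intro v hv
    have hv1 : α ⬝ᵥ v = 1 := by simpa using hv
    have hv0 : v ≠ 0 := by
      rintro rfl
      simp at hv1
    exact ⟨⟨v, hv0⟩, by simp [hv1], rfl⟩

theorem hammingNorm_mul_two_of_mem_simplexCode
    {c : {v : ι → ZMod 2 // v ≠ 0} → ZMod 2} (hc : c ∈ simplexCode ι) (hc0 : c ≠ 0) :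
    hammingNorm c * 2 = 2 ^ Fintype.card ι := by
  obtain ⟨α, rfl⟩ := mem_simplexCode.1 hc
  have hα : α ≠ 0 := by
    rintro rfl
    exact hc0 (funext fun p => zero_dotProduct _)
  have hsurj : Function.Surjective (dotProductEquiv (ZMod 2) ι α) :=
    LinearMap.surjective (by simpa using hα)
  have hcard := card_fiber_mul_card_of_surjective
    (f := (dotProductEquiv (ZMod 2) ι α).toAddMonoidHom) hsurj 1
  simpa [hammingNorm_dotProduct_eq_card] using hcard

theorem hammingNorm_ne_four_of_mem_simplexCode (hι : Fintype.card ι ≠ 3)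
    {c : {v : ι → ZMod 2 // v ≠ 0} → ZMod 2} (hc : c ∈ simplexCode ι) : hammingNorm c ≠ 4 := by
  intro hweight
  have hc0 : c ≠ 0 := by
    rintro rfl
    simp at hweight
  have hpow := hammingNorm_mul_two_of_mem_simplexCode hc hc0
  rw [hweight] at hpow
  exact hι (Nat.pow_right_injective le_rfl hpow.symm)

end SimplexCode

theorem halfSum_mem_halfCodeLattice (α : Fin 4 → ZMod 2) :
    halfSum α ∈ halfCodeLattice ℚ (simplexCode (Fin 4)) := by
  refine mem_halfCodeLattice.2
    ⟨fun p => if α ⬝ᵥ p.val = 1 then 1 else 0, mem_simplexCode.2 ⟨α, ?_⟩, ?_⟩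
  · funext p
    by_cases hp : α ⬝ᵥ p.val = 1
    · simp [hp]
    · have hp0 : α ⬝ᵥ p.val = 0 := by
        by_contra h
        exact hp (Fin.eq_one_of_ne_zero _ h)
      simp [hp0]
  · ext p
    simp [halfSum, Mvec, Pi.single_apply, dotProduct]

theorem MLattice_le_halfCodeLattice : MLattice ≤ halfCodeLattice ℚ (simplexCode (Fin 4)) := by
  refine Submodule.span_le.2 (Set.union_subset ?_ ?_)
  · rintro _ ⟨p, rfl⟩
    exact single_one_mem_halfCodeLattice _ p
  · rintro _ ⟨α, -, rfl⟩
    exact halfSum_mem_halfCodeLattice α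

theorem B_self (x : V) : B x x = -2 * ∑ p, x p ^ 2 := by
  simp only [B, sq]

/-- The only vectors of square `-2` in `M_{(ℤ/2ℤ)⁴}` are `± M_p`, `p ∈ P`. -/
theorem stmt_13 (x : V) (hx : x ∈ MLattice) (h2 : B x x = -2) :
    ∃ p : P, x = Mvec p ∨ x = -Mvec p := by
  exact stmt_13_general (fun _ => hammingNorm_ne_four_of_mem_simplexCode (by simp))
    (MLattice_le_halfCodeLattice hx) (by linarith [B_self x])

end Stmt13
end
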